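/- arXiv:1504.03500 — 3 statements merged into one kernel-verified Lean document; each statement's English description precedes it below -/
import Mathlib

section
/- Every cubic graph admits a 5-weak bisection. -/
open SimpleGraph

/-- A cubic graph: every vertex has degree 3. -/
def IsCubic {V : Type*} [Fintype V] (G : SimpleGraph V) : Prop :=
  ∀ v : V, Nat.card (G.neighborSet v) = 3

/-- A circular nowhere-zero `r`-flow: an orientation `dir` of `G` together with
a flow value `f` on each directed edge, with values in `[1, r-1]` and flow
conservation at every vertex. -/
structure CNZF {V : Type*} [Fintype V] (G : SimpleGraph V) (r : ℝ) where
  dir : V → V → Bool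
  f : V → V → ℝ
  orients : ∀ u v, G.Adj u v ↔ (dir u v = true ∨ dir v u = true)
  asymm : ∀ u v, dir u v = true → dir v u = false
  lb : ∀ u v, dir u v = true → 1 ≤ f u v
  ub : ∀ u v, dir u v = true → f u v ≤ r - 1
  conserv : ∀ v : V, (∑ u : V, if dir v u = true then f v u else 0)
      = ∑ u : V, if dir u v = true then f u v else 0

/-- Out-degree of a vertex in an orientation. -/
noncomputable def outDeg {V : Type*} (dir : V → V → Bool) (v : V) : ℕ :=
  Nat.card {u | dir v u = true}

/-- Every connected component of the subgraph induced by `S` is a tree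
on at most `m` vertices. -/
def MonoOK {V : Type*} (G : SimpleGraph V) (m : ℕ) (S : Set V) : Prop :=
  (G.induce S).IsAcyclic ∧
    ∀ c : (G.induce S).ConnectedComponent, Nat.card c.supp ≤ m

/-- A `k`-weak bisection, given by its first part `S`. -/
def IsWeakBisection {V : Type*} [Fintype V] (G : SimpleGraph V) (k : ℕ) (S : Set V) : Prop :=
  Nat.card S = Nat.card (Sᶜ : Set V) ∧ MonoOK G (k-2) S ∧ MonoOK G (k-2) (Sᶜ : Set V)

/-- Every monochromatic component of the 2-coloring `c` has at most `m` vertices. -/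
def MonoAtMost {V : Type*} (G : SimpleGraph V) (c : V → Bool) (m : ℕ) : Prop :=
  ∀ b : Bool, ∀ comp : (G.induce {v | c v = b}).ConnectedComponent,
    Nat.card comp.supp ≤ m

/-- Edges of `L_k` (on vertex labels `0, …, 5+2k`): `L_0` is `K_{3,3}` minus an
edge (parts `{0,1,4}` and `{2,3,5}`, edge `45` removed, degree-2 vertices `4,5`);
at step `j` the two new adjacent vertices `4+2j, 5+2j` are attached to the
previous degree-2 vertices `2+2j, 3+2j`. The degree-2 vertices of `L_k` are
`4+2k` and `5+2k`. -/
def LEdge (k : ℕ) (a b : ℕ) : Prop :=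
  (a, b) ∈ ({(0,2),(0,3),(0,5),(1,2),(1,3),(1,5),(4,2),(4,3)} : Set (ℕ × ℕ)) ∨
  ∃ j, 1 ≤ j ∧ j ≤ k ∧
    ((a, b) = (4+2*j, 5+2*j) ∨ (a, b) = (2+2*j, 4+2*j) ∨ (a, b) = (3+2*j, 5+2*j))

/-- The graph `L_k`. -/
def Lgraph (k : ℕ) : SimpleGraph (Fin (6+2*k)) :=
  SimpleGraph.fromRel (fun a b => LEdge k a.val b.val)

/-- Edges of `T_k`: one copy of `L'_k` (the copy of `L_k` on `0..5+2k` with apex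
`6+2k`), two copies of `L'_0` (on `7+2k..12+2k` with apex `13+2k`, and on
`14+2k..19+2k` with apex `20+2k`), and a central vertex `21+2k` adjacent to the
three apexes. -/
def TEdge (k : ℕ) (a b : ℕ) : Prop :=
  LEdge k a b
  ∨ (a = 6+2*k ∧ (b = 4+2*k ∨ b = 5+2*k))
  ∨ (∃ a' b', LEdge 0 a' b' ∧ a = 7+2*k+a' ∧ b = 7+2*k+b')
  ∨ (a = 13+2*k ∧ (b = 11+2*k ∨ b = 12+2*k))
  ∨ (∃ a' b', LEdge 0 a' b' ∧ a = 14+2*k+a' ∧ b = 14+2*k+b')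
  ∨ (a = 20+2*k ∧ (b = 18+2*k ∨ b = 19+2*k))
  ∨ (a = 21+2*k ∧ (b = 6+2*k ∨ b = 13+2*k ∨ b = 20+2*k))

/-- The cubic graph `T_k`. -/
def Tgraph (k : ℕ) : SimpleGraph (Fin (22+2*k)) :=
  SimpleGraph.fromRel (fun a b => TEdge k a.val b.val)

/-- A valid factor of `G`: a spanning subgraph all of whose components are paths
or cycles (equivalently, all degrees are 1 or 2), such that the two endpoints
(degree-1 vertices) of every odd component are non-adjacent in `G`; in particular
no component is an isolated vertex. -/
def IsValidFactor {V : Type*} (G H : SimpleGraph V) : Prop :=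
  H ≤ G ∧
  (∀ v : V, 1 ≤ Nat.card (H.neighborSet v) ∧ Nat.card (H.neighborSet v) ≤ 2) ∧
  ∀ c : H.ConnectedComponent, Odd (Nat.card c.supp) →
    ∀ u v : V, u ∈ c.supp → v ∈ c.supp → u ≠ v →
      Nat.card (H.neighborSet u) = 1 → Nat.card (H.neighborSet v) = 1 → ¬ G.Adj u v

/-- A component of `H` is a cycle iff all its vertices have degree 2 in `H`. -/
def IsCycleComp {V : Type*} (H : SimpleGraph V) (c : H.ConnectedComponent) : Prop :=
  ∀ v ∈ c.supp, Nat.card (H.neighborSet v) = 2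

/-- An odd cycle component. -/
def OddCycleComp {V : Type*} (H : SimpleGraph V) (c : H.ConnectedComponent) : Prop :=
  Odd (Nat.card c.supp) ∧ IsCycleComp H c

/-- An odd path component (a component with an odd number of vertices containing
a degree-1 vertex). -/
def OddPathComp {V : Type*} (H : SimpleGraph V) (c : H.ConnectedComponent) : Prop :=
  Odd (Nat.card c.supp) ∧ ∃ v ∈ c.supp, Nat.card (H.neighborSet v) = 1

noncomputable def numComponents {V : Type*} (H : SimpleGraph V) : ℕ := Nat.card H.ConnectedComponent

noncomputable def numOddCycles {V : Type*} (H : SimpleGraph V) : ℕ :=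
  Nat.card {c : H.ConnectedComponent // OddCycleComp H c}

/-- `H` is a valid factor of `G` with the minimum number of components. -/
def MinimizesComponents {V : Type*} (G H : SimpleGraph V) : Prop :=
  IsValidFactor G H ∧ ∀ H' : SimpleGraph V, IsValidFactor G H' →
    numComponents H ≤ numComponents H'

/-- `H` is a valid factor of `G` minimizing the number of components and,
subject to that, the number of odd cycles. -/
def IsMinValidFactor {V : Type*} (G H : SimpleGraph V) : Prop :=
  MinimizesComponents G H ∧
  ∀ H' : SimpleGraph V, IsValidFactor G H' →
    numComponents H' = numComponents H → numOddCycles H ≤ numOddCycles H'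

/-- An external vertex of a factor: an endpoint of a path component, or a vertex
of an odd cycle component. -/
def ExternalVtx {V : Type*} (H : SimpleGraph V) (v : V) : Prop :=
  Nat.card (H.neighborSet v) = 1 ∨ OddCycleComp H (H.connectedComponentMk v)


theorem monoOK_of_local {V : Type*} [Fintype V] (G : SimpleGraph V) (S : Set V)
    (h1 : ∀ v a b d, v ∈ S → a ∈ S → b ∈ S → d ∈ S → G.Adj v a → G.Adj v b → G.Adj v d →
      a ≠ b → a ≠ d → b ≠ d → False)
    (h2 : ∀ x y a b a' b', x ∈ S → y ∈ S → a ∈ S → b ∈ S → a' ∈ S → b' ∈ S → G.Adj x y →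
      G.Adj x a → G.Adj x b → a ≠ b → G.Adj y a' → G.Adj y b' → a' ≠ b' → False) :
    MonoOK G 3 S := by
  classical
  set H := G.induce S with hH
  have adjH : ∀ x y : S, H.Adj x y ↔ G.Adj x y := fun x y => by simp [hH]
  have h2' : ∀ x y : S, H.Adj x y → (∀ a b, H.Adj x a → H.Adj x b → a = b) ∨
      (∀ a b, H.Adj y a → H.Adj y b → a = b) := by
    intro x y hxy
    by_contra hcon
    push Not at hcon
    obtain ⟨⟨a, b, ha, hb, hab⟩, ⟨a', b', ha', hb', hab'⟩⟩ := hcon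
    exact h2 x y a b a' b' x.2 y.2 a.2 b.2 a'.2 b'.2 hxy ha hb (fun h => hab (Subtype.ext h))
      ha' hb' (fun h => hab' (Subtype.ext h))
  have leaf : ∀ x y : S, H.Adj x y → (∀ a b, H.Adj x a → H.Adj x b → a = b) →
      ¬ (H \ fromEdgeSet {s(x, y)}).Reachable x y := by
    intro x y hxy hx ⟨w⟩
    cases w with
    | nil => exact hxy.ne rfl
    | cons h p =>
      rw [sdiff_adj] at h
      have := hx _ _ h.1 hxy
      subst this
      apply h.2
      simp [hxy.ne]
  refine ⟨?_, ?_⟩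
  · rw [isAcyclic_iff_forall_adj_isBridge]
    intro x y hxy
    rw [isBridge_iff]
    rcases h2' x y hxy with h | h
    · exact leaf x y hxy h
    · intro hr
      refine leaf y x hxy.symm h ?_
      rw [Sym2.eq_swap]
      exact hr.symm
  · intro c
    obtain ⟨z, hz, hcen⟩ : ∃ z, z ∈ c.supp ∧ ∀ y w, H.Adj z y → H.Adj y w → w = z := by
      by_cases hex : ∃ z ∈ c.supp, ∃ a b, H.Adj z a ∧ H.Adj z b ∧ a ≠ b
      · obtain ⟨z, hz, a, b, ha, hb, hab⟩ := hex
        refine ⟨z, hz, fun y w hy hw => ?_⟩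
        rcases h2' z y hy with h | h
        · exact absurd (h a b ha hb) hab
        · exact h _ _ hw hy.symm
      · push Not at hex
        obtain ⟨z, hz⟩ := c.nonempty_supp
        refine ⟨z, hz, fun y w hy hw => ?_⟩
        have hy' : y ∈ c.supp := by
          rw [ConnectedComponent.mem_supp_iff] at hz ⊢
          rw [← hz]
          exact ConnectedComponent.sound hy.symm.reachable
        exact hex y hy' w z hw hy.symm
    have hsub : c.supp ⊆ ((insert z (H.neighborFinset z) : Finset S) : Set S) := by
      intro v hv
      have hr : H.Reachable v z := by
        rw [ConnectedComponent.mem_supp_iff] at hz hv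
        exact ConnectedComponent.exact (hv.trans hz.symm)
      obtain ⟨w⟩ := hr
      clear hv
      induction w with
      | nil => simp
      | cons h p ih =>
        have := ih hz hcen
        simp only [Finset.coe_insert, Set.mem_insert_iff, Finset.mem_coe, mem_neighborFinset] at this ⊢
        rcases this with rfl | h'
        · exact Or.inr h.symm
        · exact Or.inl (hcen _ _ h' h.symm)
    have hdeg : (H.neighborFinset z).card ≤ 2 := by
      by_contra hlt
      obtain ⟨a, b, d, ha, hb, hd, hab, had, hbd⟩ := Finset.two_lt_card_iff.1 (not_le.1 hlt)
      rw [mem_neighborFinset] at ha hb hd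
      exact h1 z a b d z.2 a.2 b.2 d.2 ha hb hd (fun h => hab (Subtype.ext h))
        (fun h => had (Subtype.ext h)) (fun h => hbd (Subtype.ext h))
    calc Nat.card c.supp ≤ Nat.card ((insert z (H.neighborFinset z) : Finset S) : Set S) :=
          Nat.card_mono (Finset.finite_toSet _) hsub
      _ = (insert z (H.neighborFinset z)).card := by rw [Nat.card_coe_set_eq, Set.ncard_coe_finset]
      _ ≤ 3 := (Finset.card_insert_le _ _).trans (by omega)

section WeakBisectionProof

/-- `p` is a Hamiltonian path of the vertex set `X`. -/
def HPath {V : Type*} (G : SimpleGraph V) (X : Finset V) (p : List V) : Prop :=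
  p ≠ [] ∧ p.IsChain G.Adj ∧ (p : Multiset V) = X.val

/-- `w` occurs at an odd position of `p`. -/
def OddIdx {V : Type*} (p : List V) (w : V) : Prop := ∃ i : ℕ, Odd i ∧ p[i]? = some w

/-- A Hamiltonian path whose alternating colouring creates no problem at its ends. -/
def FinePath {V : Type*} (G : SimpleGraph V) (X : Finset V) (p : List V) : Prop :=
  HPath G X p ∧ 2 ≤ p.length ∧ (Even p.length ∨ ∀ x ∈ p.head?, ∀ y ∈ p.getLast?, G.Adj x y →
    ∀ w, G.Adj x w → w ≠ y → OddIdx p w)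

/-- A traceable set without fine path. -/
def BadSet {V : Type*} (G : SimpleGraph V) (X : Finset V) : Prop :=
  (∃ p, HPath G X p) ∧ ¬ ∃ p, FinePath G X p

theorem HPath.length_eq {V : Type*} {G : SimpleGraph V} {X : Finset V} {p : List V}
    (h : HPath G X p) : p.length = X.card := by
  have := congrArg Multiset.card h.2.2
  simpa using this

theorem HPath.nodup {V : Type*} {G : SimpleGraph V} {X : Finset V} {p : List V}
    (h : HPath G X p) : p.Nodup := by
  have := X.nodup
  rw [← h.2.2] at this
  simpa using this

theorem HPath.mem_iff {V : Type*} {G : SimpleGraph V} {X : Finset V} {p : List V}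
    (h : HPath G X p) (v : V) : v ∈ p ↔ v ∈ X := by
  rw [← Finset.mem_val, ← h.2.2, Multiset.mem_coe]

theorem chain_reverse {V : Type*} {G : SimpleGraph V} {p : List V}
    (h : p.IsChain G.Adj) : p.reverse.IsChain G.Adj := by
  rw [List.isChain_reverse]
  exact h.imp fun a b hab => hab.symm

theorem HPath.reverse {V : Type*} {G : SimpleGraph V} {X : Finset V} {p : List V}
    (h : HPath G X p) : HPath G X p.reverse :=
  ⟨by simpa using h.1, chain_reverse h.2.1, by rw [← h.2.2]; simp⟩

theorem BadSet.odd_card {V : Type*} {G : SimpleGraph V} {X : Finset V} (h : BadSet G X) :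
    Odd X.card := by
  obtain ⟨⟨p, hp⟩, hn⟩ := h
  by_contra hodd
  rw [Nat.not_odd_iff_even] at hodd
  have hl := hp.length_eq
  have : 0 < p.length := List.length_pos_iff.2 hp.1
  refine hn ⟨p, hp, ?_, Or.inl (hl ▸ hodd)⟩
  obtain ⟨k, hk⟩ := hodd
  omega

/-- In a bad set with at least two vertices each Hamiltonian path closes up, and its first vertex
has a further neighbour not at an odd position. -/
theorem BadSet.closes {V : Type*} {G : SimpleGraph V} {X : Finset V} (h : BadSet G X)
    (h2 : 2 ≤ X.card) {x y : V} {p : List V} (hp : HPath G X p) (hx : x ∈ p.head?)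
    (hy : y ∈ p.getLast?) : G.Adj x y ∧ ∃ w, G.Adj x w ∧ w ≠ y ∧ ¬ OddIdx p w := by
  by_contra hcon
  push Not at hcon
  refine h.2 ⟨p, hp, hp.length_eq ▸ h2, Or.inr ?_⟩
  intro x' hx' y' hy' hadj w hw hwy
  rw [Option.mem_def] at hx hx' hy hy'
  rw [hx] at hx'
  rw [hy] at hy'
  cases hx'
  cases hy'
  exact hcon hadj w hw hwy

theorem BadSet.traceable {V : Type*} {G : SimpleGraph V} {X : Finset V} (h : BadSet G X)
    {u : V} (hu : u ∈ X) : ∃ p, HPath G X (u :: p) := by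
  obtain ⟨p, hp⟩ := h.1
  obtain ⟨l1, l2, rfl⟩ := List.append_of_mem ((hp.mem_iff u).2 hu)
  rcases l1 with _ | ⟨a, l1⟩
  · exact ⟨l2, hp⟩
  have h2 : 2 ≤ X.card := by
    rw [← hp.length_eq]
    simp
    omega
  obtain ⟨y, hy⟩ : ∃ y, y ∈ (a :: l1 ++ u :: l2).getLast? :=
    ⟨_, List.getLast?_eq_getLast_of_ne_nil hp.1⟩
  have hadj := (h.closes h2 hp (x := a) (by simp) hy).1
  refine ⟨l2 ++ a :: l1, by simp, ?_, ?_⟩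
  · rw [← List.cons_append]
    refine List.IsChain.append (hp.2.1.right_of_append) (hp.2.1.left_of_append) ?_
    intro x hx z hz
    have hz' : z = a := by simpa using hz.symm
    subst hz'
    have : x = y := by
      rw [List.getLast?_append] at hy
      rw [Option.mem_def] at hx hy
      rw [hx] at hy
      simpa using hy
    subst this
    exact hadj.symm
  · rw [← hp.2.2, Multiset.coe_eq_coe, ← List.cons_append]
    exact List.perm_append_comm

theorem four_nbrs {V : Type*} [Fintype V] [DecidableEq V] {G : SimpleGraph V} [DecidableRel G.Adj]
    (h3 : ∀ v, (Finset.univ.filter (G.Adj v)).card = 3) {v a b c d : V} (ha : G.Adj v a)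
    (hb : G.Adj v b) (hc : G.Adj v c) (hd : G.Adj v d) (hab : a ≠ b) (hac : a ≠ c) (had : a ≠ d)
    (hbc : b ≠ c) (hbd : b ≠ d) (hcd : c ≠ d) : False := by
  have : ({a, b, c, d} : Finset V) ⊆ Finset.univ.filter (G.Adj v) := by
    intro x hx
    simp only [Finset.mem_insert, Finset.mem_singleton] at hx
    rcases hx with rfl | rfl | rfl | rfl <;> simp [*]
  have h4 : ({a, b, c, d} : Finset V).card = 4 := by
    simp [*]
  have := Finset.card_le_card this
  rw [h3, h4] at this
  omega

theorem BadSet.exists_out {V : Type*} [Fintype V] [DecidableEq V] {G : SimpleGraph V}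
    [DecidableRel G.Adj] (h3 : ∀ v, (Finset.univ.filter (G.Adj v)).card = 3) {X : Finset V}
    (h : BadSet G X) (h2 : 2 ≤ X.card) {u : V} (hu : u ∈ X) : ∃ q, q ∉ X ∧ G.Adj u q := by
  by_contra hcon
  push Not at hcon
  have hin : ∀ w, G.Adj u w → w ∈ X := fun w hw => by
    by_contra hwX
    exact hcon w hwX hw
  obtain ⟨p, hp⟩ := h.traceable hu
  have hodd := h.odd_card
  have hlen := hp.length_eq
  rw [List.length_cons] at hlen
  -- write the path as u, f, ..., l
  obtain ⟨f, m, rfl⟩ : ∃ f m, p = f :: m := by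
    rcases p with _ | ⟨f, m⟩
    · simp at hlen; omega
    · exact ⟨f, m, rfl⟩
  obtain ⟨m, l, rfl⟩ : ∃ m' l, m = m' ++ [l] := by
    rcases List.eq_nil_or_concat m with rfl | ⟨m', l, rfl⟩
    · simp at hlen
      rw [← hlen] at hodd
      exact absurd hodd (by decide)
    · exact ⟨m', l, by simp⟩
  have hnd := hp.nodup
  have hrot : HPath G X (u :: l :: (m.reverse ++ [f])) := by
    refine ⟨by simp, ?_, ?_⟩
    · have hc := chain_reverse (List.IsChain.tail hp.2.1)
      simp only [List.tail_cons, List.reverse_cons, List.reverse_append, List.reverse_nil,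
        List.nil_append, List.cons_append] at hc
      refine List.IsChain.cons hc ?_
      intro y hy
      have : y = l := by simpa using hy.symm
      subst this
      exact (h.closes h2 hp (x := u) (y := y) (by simp) (by simp [List.getLast?_cons])).1
    · rw [← hp.2.2, Multiset.coe_eq_coe]
      refine List.Perm.cons _ ?_
      have := List.reverse_perm (f :: (m ++ [l]))
      simpa using this
  obtain ⟨hul, w, hw, hwl, hwo⟩ :=
    h.closes h2 hp (x := u) (y := l) (by simp) (by simp [List.getLast?_cons])
  obtain ⟨huf, w', hw', hwf', hwo'⟩ :=
    h.closes h2 hrot (x := u) (y := f) (by simp) (by simp [List.getLast?_cons])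
  have hwf : w ≠ f := by
    rintro rfl
    exact hwo ⟨1, by decide, by simp⟩
  have hwl' : w' ≠ l := by
    rintro rfl
    exact hwo' ⟨1, by decide, by simp⟩
  have hfl : f ≠ l := by
    rintro rfl
    simp at hnd
  by_cases hww : w = w'
  · subst hww
    have hwX := (hp.mem_iff w).2 (hin w hw)
    have hwm : w ∈ m := by
      simp only [List.mem_cons, List.mem_append, List.not_mem_nil, or_false] at hwX
      rcases hwX with rfl | rfl | hm | rfl
      · exact absurd rfl hw.ne
      · exact absurd rfl hwf
      · exact hm
      · exact absurd rfl hwl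
    obtain ⟨i, hi, hiw⟩ := List.getElem_of_mem hwm
    have hiw2 : m[i]? = some w := by rw [List.getElem?_eq_getElem hi, hiw]
    have hi1 : ¬ Odd (i + 2) := fun ho => hwo ⟨i + 2, ho, by
      simp [List.getElem?_append_left hi, hiw2]⟩
    have hi2 : ¬ Odd (m.length - 1 - i + 2) := fun ho => hwo' ⟨m.length - 1 - i + 2, ho, by
      have hlt : m.length - 1 - i < m.reverse.length := by simp; omega
      have : m.length - 1 - (m.length - 1 - i) = i := by omega
      simp [List.getElem?_append_left hlt, this, hiw2,
        List.getElem?_reverse (show m.length - 1 - i < m.length by omega)]⟩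
    simp at hlen
    rw [Nat.not_odd_iff_even] at hi1 hi2
    obtain ⟨a, ha⟩ := hi1
    obtain ⟨b, hb⟩ := hi2
    obtain ⟨c, hc⟩ := hodd
    omega
  · exact four_nbrs h3 hw hw' hul huf hww hwl hwf hwl' hwf' hfl.symm

theorem BadSet.three_out {V : Type*} [Fintype V] [DecidableEq V] {G : SimpleGraph V}
    [DecidableRel G.Adj] (h3 : ∀ v, (Finset.univ.filter (G.Adj v)).card = 3) {X : Finset V}
    (h : BadSet G X) :
    3 ≤ ∑ u ∈ X, (Finset.univ.filter fun q => q ∉ X ∧ G.Adj u q).card := by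
  by_cases h2 : 2 ≤ X.card
  · have hodd := h.odd_card
    have h3' : 3 ≤ X.card := by
      obtain ⟨c, hc⟩ := hodd
      omega
    calc 3 ≤ X.card := h3'
      _ = ∑ u ∈ X, 1 := by simp
      _ ≤ _ := Finset.sum_le_sum fun u hu => by
        obtain ⟨q, hq, hq'⟩ := h.exists_out h3 h2 hu
        exact Finset.card_pos.2 ⟨q, by simp [hq, hq']⟩
  · obtain ⟨c, hc⟩ := h.odd_card
    have h1 : X.card = 1 := by omega
    obtain ⟨v, rfl⟩ := Finset.card_eq_one.1 h1
    rw [Finset.sum_singleton, ← h3 v]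
    refine Finset.card_le_card ?_
    intro q hq
    simp only [Finset.mem_filter, Finset.mem_univ, true_and, Finset.mem_singleton] at hq ⊢
    exact ⟨fun e => hq.ne e.symm, hq⟩

/-- A partition of the vertex set into traceable parts. -/
def PForest {V : Type*} [Fintype V] (G : SimpleGraph V) (F : Multiset (Finset V)) : Prop :=
  (∀ X ∈ F, ∃ p, HPath G X p) ∧ (F.map Finset.val).sum = (Finset.univ : Finset V).val

open Classical in
/-- The weight of a part. -/
noncomputable def wt {V : Type*} (G : SimpleGraph V) (X : Finset V) : ℕ :=
  if BadSet G X then 3 else 2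

/-- A forest of minimum total weight. -/
def OptForest {V : Type*} [Fintype V] (G : SimpleGraph V) (F : Multiset (Finset V)) : Prop :=
  PForest G F ∧ ∀ F', PForest G F' → (F.map (wt G)).sum ≤ (F'.map (wt G)).sum

theorem two_le_wt {V : Type*} (G : SimpleGraph V) (X : Finset V) : 2 ≤ wt G X := by
  unfold wt; split_ifs <;> omega

theorem wt_le_three {V : Type*} (G : SimpleGraph V) (X : Finset V) : wt G X ≤ 3 := by
  unfold wt; split_ifs <;> omega

theorem wt_bad {V : Type*} {G : SimpleGraph V} {X : Finset V} (h : BadSet G X) : wt G X = 3 := by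
  unfold wt; rw [if_pos h]

theorem wt_good {V : Type*} {G : SimpleGraph V} {X : Finset V} (h : ¬ BadSet G X) :
    wt G X = 2 := by
  unfold wt; rw [if_neg h]

theorem exists_optForest {V : Type*} [Fintype V] (G : SimpleGraph V) : ∃ F, OptForest G F := by
  classical
  have hne : ∃ n F, PForest G F ∧ (F.map (wt G)).sum = n := by
    refine ⟨_, (Finset.univ : Finset V).val.map fun v => {v}, ⟨?_, ?_⟩, rfl⟩
    · intro X hX
      obtain ⟨v, -, rfl⟩ := Multiset.mem_map.1 hX
      exact ⟨[v], by simp, by simp, by simp⟩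
    · rw [Multiset.map_map]
      exact Multiset.sum_map_singleton _
  obtain ⟨F, hF, hn⟩ := Nat.find_spec hne
  exact ⟨F, hF, fun F' hF' => hn ▸ Nat.find_min' hne ⟨F', hF', rfl⟩⟩

theorem exists_finset_of_le {V : Type*} [Fintype V] {p : List V} {m : Multiset V}
    (h : (p : Multiset V) + m ≤ (Finset.univ : Finset V).val) :
    ∃ X : Finset V, X.val = (p : Multiset V) :=
  ⟨⟨(p : Multiset V), Multiset.nodup_of_le ((Multiset.le_add_right _ _).trans h)
    Finset.univ.nodup⟩, rfl⟩

/-- Two parts of an optimal forest cannot be merged. -/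
theorem OptForest.no_merge {V : Type*} [Fintype V] {G : SimpleGraph V} {X Y : Finset V}
    {R : Multiset (Finset V)} (h : OptForest G (X ::ₘ Y ::ₘ R)) {p : List V}
    (hp : p.IsChain G.Adj) (hpv : (p : Multiset V) = X.val + Y.val) : False := by
  have hs := h.1.2
  simp only [Multiset.map_cons, Multiset.sum_cons] at hs
  rw [← add_assoc, ← hpv] at hs
  obtain ⟨Z, hZ⟩ := exists_finset_of_le hs.le
  have hne : p ≠ [] := by
    rintro rfl
    obtain ⟨q, hq⟩ := h.1.1 X (by simp)
    apply hq.1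
    have h0 := congrArg Multiset.card hpv
    have h1 := hq.length_eq
    simp only [Multiset.coe_nil, Multiset.card_zero, Multiset.card_add, Finset.card_val] at h0
    exact List.eq_nil_of_length_eq_zero (by omega)
  have hF : PForest G (Z ::ₘ R) := by
    refine ⟨?_, ?_⟩
    · intro W hW
      rcases Multiset.mem_cons.1 hW with rfl | hW
      · exact ⟨p, hne, hp, hZ.symm⟩
      · exact h.1.1 W (by simp [hW])
    · simp only [Multiset.map_cons, Multiset.sum_cons, hZ, hs]
  have := h.2 _ hF
  simp only [Multiset.map_cons, Multiset.sum_cons] at this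
  have h1 := two_le_wt G X
  have h2 := two_le_wt G Y
  have h3 := wt_le_three G Z
  omega

/-- Replacing two parts by two others. -/
theorem OptForest.swap {V : Type*} [Fintype V] {G : SimpleGraph V} {X Y : Finset V}
    {R : Multiset (Finset V)} (h : OptForest G (X ::ₘ Y ::ₘ R)) {p q : List V}
    (hp : p.IsChain G.Adj) (hq : q.IsChain G.Adj) (hp0 : p ≠ []) (hq0 : q ≠ [])
    (hpv : (p : Multiset V) + (q : Multiset V) = X.val + Y.val) :
    ∃ Z W : Finset V, HPath G Z p ∧ HPath G W q ∧ wt G X + wt G Y ≤ wt G Z + wt G W ∧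
      (wt G Z + wt G W ≤ wt G X + wt G Y → OptForest G (Z ::ₘ W ::ₘ R)) := by
  have hs := h.1.2
  simp only [Multiset.map_cons, Multiset.sum_cons] at hs
  rw [← add_assoc, ← hpv] at hs
  obtain ⟨Z, hZ⟩ := exists_finset_of_le (p := p) (m := q + (R.map Finset.val).sum)
    (by rw [← add_assoc]; exact hs.le)
  obtain ⟨W, hW⟩ := exists_finset_of_le (p := q) (m := p + (R.map Finset.val).sum)
    (by rw [← add_assoc, add_comm (q : Multiset V)]; exact hs.le)
  have hZp : HPath G Z p := ⟨hp0, hp, hZ.symm⟩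
  have hWq : HPath G W q := ⟨hq0, hq, hW.symm⟩
  have hF : PForest G (Z ::ₘ W ::ₘ R) := by
    refine ⟨?_, ?_⟩
    · intro U hU
      simp only [Multiset.mem_cons] at hU
      rcases hU with rfl | rfl | hU
      · exact ⟨p, hZp⟩
      · exact ⟨q, hWq⟩
      · exact h.1.1 U (by simp [hU])
    · simp only [Multiset.map_cons, Multiset.sum_cons, hZ, hW]
      rw [← add_assoc, hs]
  refine ⟨Z, W, hZp, hWq, ?_, ?_⟩
  · have := h.2 _ hF
    simp only [Multiset.map_cons, Multiset.sum_cons] at this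
    omega
  · intro hle
    refine ⟨hF, fun F' hF' => ?_⟩
    have := h.2 _ hF'
    simp only [Multiset.map_cons, Multiset.sum_cons] at this ⊢
    omega

/-- `q` followed by a Hamiltonian path of `A` is a path. -/
def Att {V : Type*} (G : SimpleGraph V) (q : V) (A : Finset V) : Prop :=
  ∃ l : List V, (q :: l).IsChain G.Adj ∧ (l : Multiset V) = A.val

/-- `t` is the disjoint union of `A`, `q`, `B`, with `q` attached to both `A` and `B`. -/
def Tri {V : Type*} (G : SimpleGraph V) (A : Finset V) (q : V) (B t : Finset V) : Prop :=
  t.val = A.val + {q} + B.val ∧ Att G q A ∧ Att G q B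

theorem Tri.symm {V : Type*} {G : SimpleGraph V} {A B t : Finset V} {q : V} (h : Tri G A q B t) :
    Tri G B q A t := by
  refine ⟨?_, h.2.2, h.2.1⟩
  rw [h.1]
  abel

theorem half_step {V : Type*} [Fintype V] {G : SimpleGraph V} {L Q : Finset V}
    {R : Multiset (Finset V)} (h : OptForest G (L ::ₘ Q ::ₘ R)) (hL : BadSet G L) {u q : V}
    (hu : u ∈ L) (huq : G.Adj u q) {as bs : List V} (hQ : HPath G Q (as ++ q :: bs)) :
    ∃ A B X : Finset V, (as : Multiset V) = A.val ∧ (bs : Multiset V) = B.val ∧ BadSet G B ∧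
      Tri G A q L X ∧ Att G q B ∧ OptForest G (X ::ₘ B ::ₘ R) := by
  obtain ⟨lp, hlp⟩ := hL.traceable hu
  have hQv := hQ.2.2
  have hLv := hlp.2.2
  have hc := List.isChain_split.1 hQ.2.1
  have hqL : (q :: u :: lp).IsChain G.Adj :=
    List.IsChain.cons hlp.2.1 (by intro y hy; obtain rfl : u = y := by simpa using hy
                                  exact huq.symm)
  have hchain : (as ++ q :: u :: lp).IsChain G.Adj := List.isChain_split.2 ⟨hc.1, hqL⟩
  have hbs0 : bs ≠ [] := by
    rintro rfl
    refine h.no_merge hchain ?_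
    rw [← hLv, ← hQv, Multiset.coe_add, Multiset.coe_eq_coe]
    have : as ++ q :: u :: lp = (as ++ [q]) ++ (u :: lp) := by simp
    rw [this]
    exact List.perm_append_comm
  have hbs : bs.IsChain G.Adj := List.IsChain.tail hc.2
  obtain ⟨X, B, hX, hB, hw, hopt⟩ := h.swap (p := as ++ q :: u :: lp) (q := bs) hchain hbs
    (by simp) hbs0 (by
      rw [← hLv, ← hQv, Multiset.coe_add, Multiset.coe_add, Multiset.coe_eq_coe]
      have e1 : as ++ q :: u :: lp ++ bs = (as ++ [q]) ++ ((u :: lp) ++ bs) := by simp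
      have e2 : u :: lp ++ (as ++ q :: bs) = (u :: lp) ++ ((as ++ [q]) ++ bs) := by simp
      rw [e1, e2, ← List.append_assoc, ← List.append_assoc]
      exact List.Perm.append_right _ List.perm_append_comm)
  have hXgood : ¬ BadSet G X := by
    intro hXb
    obtain ⟨xp, hxp⟩ := hXb.traceable (u := q) ((hX.mem_iff q).1 (by simp))
    refine h.no_merge (p := (q :: xp).reverse ++ bs) ?_ ?_
    · rw [List.reverse_cons, List.append_assoc]
      refine List.isChain_split.2 ⟨?_, hc.2⟩
      rw [← List.reverse_cons]
      exact chain_reverse hxp.2.1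
    · have e0 : ((q :: xp).reverse : Multiset V) = (as ++ q :: u :: lp : List V) := by
        rw [hxp.reverse.2.2, hX.2.2]
      rw [← Multiset.coe_add, e0, ← hLv, ← hQv, Multiset.coe_add, Multiset.coe_add,
        Multiset.coe_eq_coe]
      have e1 : as ++ q :: u :: lp ++ bs = (as ++ [q]) ++ ((u :: lp) ++ bs) := by simp
      have e2 : u :: lp ++ (as ++ q :: bs) = (u :: lp) ++ ((as ++ [q]) ++ bs) := by simp
      rw [e1, e2, ← List.append_assoc, ← List.append_assoc]
      exact List.Perm.append_right _ List.perm_append_comm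
  rw [wt_bad hL, wt_good hXgood] at hw
  have h2Q := two_le_wt G Q
  have hBbad : BadSet G B := by
    by_contra hb
    rw [wt_good hb] at hw
    omega
  obtain ⟨A, hA⟩ : ∃ A : Finset V, A.val = (as : Multiset V) := by
    refine ⟨⟨(as : Multiset V), ?_⟩, rfl⟩
    exact (List.nodup_append.1 hQ.nodup).1
  refine ⟨A, B, X, hA.symm, hB.2.2, hBbad, ⟨?_, ⟨as.reverse, ?_, ?_⟩, ⟨u :: lp, hqL, hLv⟩⟩,
    ⟨bs, hc.2, hB.2.2⟩, hopt ?_⟩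
  · rw [← hX.2.2, hA, ← hLv, ← Multiset.coe_singleton, Multiset.coe_add, Multiset.coe_add]
    simp
  · have := chain_reverse hc.1
    simpa using this
  · rw [hA]; simp
  · rw [wt_bad hBbad] at hw ⊢
    rw [wt_bad hL, wt_good hXgood]
    omega

theorem full_step {V : Type*} [Fintype V] {G : SimpleGraph V} {L : Finset V}
    {F : Multiset (Finset V)} (h : OptForest G (L ::ₘ F)) (hL : BadSet G L) {u q : V}
    (hu : u ∈ L) (huq : G.Adj u q) (hq : q ∉ L) :
    ∃ Q R A B, F = Q ::ₘ R ∧ Tri G A q B Q ∧ BadSet G A ∧ BadSet G B ∧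
      (∃ X, Tri G A q L X ∧ OptForest G (X ::ₘ B ::ₘ R)) ∧
      (∃ Y, Tri G B q L Y ∧ OptForest G (Y ::ₘ A ::ₘ R)) := by
  obtain ⟨Q, hQF, hqQ⟩ : ∃ Q ∈ F, q ∈ Q := by
    have hmem : q ∈ ((L ::ₘ F).map Finset.val).sum := by rw [h.1.2]; simp
    obtain ⟨m, hm, hqm⟩ := Multiset.mem_join.1 hmem
    obtain ⟨Q, hQ, rfl⟩ := Multiset.mem_map.1 hm
    rcases Multiset.mem_cons.1 hQ with rfl | hQ
    · exact absurd hqm hq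
    · exact ⟨Q, hQ, hqm⟩
  obtain ⟨R, rfl⟩ := Multiset.exists_cons_of_mem hQF
  obtain ⟨p, hp⟩ := h.1.1 Q (by simp)
  obtain ⟨as, bs, rfl⟩ := List.append_of_mem ((hp.mem_iff q).2 hqQ)
  obtain ⟨A, B, X, hA, hB, hBb, hT, hAt, hO⟩ := half_step h hL hu huq hp
  have hp' := hp.reverse
  have e : (as ++ q :: bs).reverse = bs.reverse ++ q :: as.reverse := by simp
  rw [e] at hp'
  obtain ⟨B', A', Y, hB', hA', hAb, hT', hAt', hO'⟩ := half_step h hL hu huq hp'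
  have eA : A' = A := by
    apply Finset.val_injective
    rw [← hA', ← hA]; simp
  have eB : B' = B := by
    apply Finset.val_injective
    rw [← hB', ← hB]; simp
  subst eA eB
  refine ⟨Q, R, A', B', rfl, ⟨?_, hAt', hT'.2.1⟩, hAb, hBb, ⟨X, hT, hO⟩, ⟨Y, hT', hO'⟩⟩
  rw [← hp.2.2, ← hA, ← hB, ← Multiset.coe_singleton, Multiset.coe_add, Multiset.coe_add]
  simp

theorem not_bad_of_even {V : Type*} {G : SimpleGraph V} {X : Finset V} {p : List V}
    (h : HPath G X p) (he : Even p.length) : ¬ BadSet G X := by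
  intro hb
  have := hb.odd_card
  rw [← h.length_eq] at this
  exact (Nat.not_even_iff_odd.2 this) he

theorem no_edge {V : Type*} [Fintype V] {G : SimpleGraph V} {L t A B : Finset V}
    {R : Multiset (Finset V)} (h : OptForest G (L ::ₘ t ::ₘ R)) (hL : BadSet G L)
    (hA : BadSet G A) (hB : BadSet G B) {q u a : V} (hT : Tri G A q B t) (hu : u ∈ L) (ha : a ∈ A)
    (hua : G.Adj u a) : False := by
  obtain ⟨lp, hlp⟩ := hL.traceable hu
  obtain ⟨ap, hap⟩ := hA.traceable ha
  obtain ⟨hv, -, bs, hbs, hbv⟩ := hT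
  obtain ⟨Z, W, hZ, hW, hw, -⟩ := h.swap (p := (u :: lp).reverse ++ a :: ap) (q := q :: bs)
    (by
      refine List.IsChain.append (chain_reverse hlp.2.1) hap.2.1 ?_
      intro x hx y hy
      obtain rfl : u = x := by simpa using hx
      obtain rfl : a = y := by simpa using hy
      exact hua) hbs (by simp) (by simp) (by
      rw [hv, ← hlp.2.2, ← hap.2.2, ← hbv, ← Multiset.coe_singleton, Multiset.coe_add,
        Multiset.coe_add, Multiset.coe_add, Multiset.coe_add, Multiset.coe_eq_coe,
        List.append_assoc, List.append_assoc]
      exact List.Perm.append (List.reverse_perm _) (by simp))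
  have hLo := hL.odd_card
  have hAo := hA.odd_card
  have hBo := hB.odd_card
  rw [← hlp.length_eq] at hLo
  rw [← hap.length_eq] at hAo
  have hBl : bs.length = B.card := by
    have := congrArg Multiset.card hbv
    simpa using this
  rw [← hBl] at hBo
  have h1 := not_bad_of_even hZ (by
    rw [List.length_append, List.length_reverse]
    exact hLo.add_odd hAo)
  have h2 := not_bad_of_even hW (by
    rw [List.length_cons]
    exact hBo.add_one)
  rw [wt_good h1, wt_good h2, wt_bad hL] at hw
  have := two_le_wt G t
  omega

theorem reach_false {V : Type*} [Fintype V] [DecidableEq V] {G : SimpleGraph V}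
    [DecidableRel G.Adj] (h3 : ∀ v, (Finset.univ.filter (G.Adj v)).card = 3) (n : ℕ) :
    ∀ (R L : Multiset (Finset V)) (M : Multiset V), R.card = n → (∀ X ∈ L, BadSet G X) →
      L.card = 2 * M.card + 1 →
      M + (L.map Finset.val).sum + (R.map Finset.val).sum = (Finset.univ : Finset V).val →
      (∀ X ∈ L, ∃ T, OptForest G (X ::ₘ (T + R)) ∧
        ∀ t ∈ T, ∃ A ∈ L, ∃ B ∈ L, ∃ q ∈ M, Tri G A q B t) → False := by
  induction n using Nat.strong_induction_on with
  | _ n ih =>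
  intro R L M hR hbad hcard hsum hinv
  by_cases hex : ∃ X ∈ L, ∃ u ∈ X, ∃ q, q ∉ X ∧ G.Adj u q ∧ q ∉ M
  · obtain ⟨X, hX, u, hu, q, hqX, huq, hqM⟩ := hex
    obtain ⟨T, hT, hTt⟩ := hinv X hX
    obtain ⟨Q, R1, A, B, hF, hTri, hA, hB, ⟨Y, hY, hYO⟩, ⟨Z, hZ, hZO⟩⟩ :=
      full_step hT (hbad X hX) hu huq hqX
    have hQ : Q ∈ T + R := by rw [hF]; simp
    rcases Multiset.mem_add.1 hQ with hQT | hQR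
    · obtain ⟨A', hA', B', hB', q', hq', hTri'⟩ := hTt Q hQT
      have hqQ : q ∈ Q.val := by rw [hTri.1]; simp
      rw [hTri'.1] at hqQ
      rw [hF] at hT
      simp only [Multiset.mem_add, Multiset.mem_singleton, Finset.mem_val] at hqQ
      rcases hqQ with (h | rfl) | h
      · exact no_edge hT (hbad X hX) (hbad A' hA') (hbad B' hB') hTri' hu h huq
      · exact hqM hq'
      · exact no_edge hT (hbad X hX) (hbad B' hB') (hbad A' hA') hTri'.symm hu h huq
    · obtain ⟨R', rfl⟩ := Multiset.exists_cons_of_mem hQR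
      obtain rfl : T + R' = R1 := by
        rw [Multiset.add_cons] at hF
        exact (Multiset.cons_inj_right Q).1 hF
      refine ih R'.card (by rw [← hR]; simp) R' (A ::ₘ B ::ₘ L) (q ::ₘ M) rfl ?_ ?_ ?_ ?_
      · intro W hW
        simp only [Multiset.mem_cons] at hW
        rcases hW with rfl | rfl | hW
        · exact hA
        · exact hB
        · exact hbad W hW
      · simp only [Multiset.card_cons]
        omega
      · rw [← hsum]
        simp only [Multiset.map_cons, Multiset.sum_cons, hTri.1]
        rw [← Multiset.singleton_add]
        abel
      · intro W hW
        simp only [Multiset.mem_cons] at hW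
        rcases hW with rfl | rfl | hW
        · refine ⟨Z ::ₘ T, ?_, ?_⟩
          · rw [Multiset.cons_add, Multiset.cons_swap]
            exact hZO
          · intro t ht
            rcases Multiset.mem_cons.1 ht with rfl | ht
            · exact ⟨B, by simp, X, by simp [hX], q, by simp, hZ⟩
            · obtain ⟨A', hA', B', hB', q', hq', h⟩ := hTt t ht
              exact ⟨A', by simp [hA'], B', by simp [hB'], q', by simp [hq'], h⟩
        · refine ⟨Y ::ₘ T, ?_, ?_⟩
          · rw [Multiset.cons_add, Multiset.cons_swap]
            exact hYO
          · intro t ht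
            rcases Multiset.mem_cons.1 ht with rfl | ht
            · exact ⟨A, by simp, X, by simp [hX], q, by simp, hY⟩
            · obtain ⟨A', hA', B', hB', q', hq', h⟩ := hTt t ht
              exact ⟨A', by simp [hA'], B', by simp [hB'], q', by simp [hq'], h⟩
        · obtain ⟨T', hT', hTt'⟩ := hinv W hW
          refine ⟨Q ::ₘ T', ?_, ?_⟩
          · rw [Multiset.cons_add, ← Multiset.add_cons]
            exact hT'
          · intro t ht
            rcases Multiset.mem_cons.1 ht with rfl | ht
            · exact ⟨A, by simp, B, by simp, q, by simp, hTri⟩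
            · obtain ⟨A', hA', B', hB', q', hq', h⟩ := hTt' t ht
              exact ⟨A', by simp [hA'], B', by simp [hB'], q', by simp [hq'], h⟩
  · push Not at hex
    set f : V → ℕ := fun u => (M.toFinset.filter fun q => G.Adj u q).card with hf
    have hlow : ∀ X ∈ L, 3 ≤ (X.val.map f).sum := by
      intro X hX
      refine ((hbad X hX).three_out h3).trans ?_
      refine Finset.sum_le_sum fun u hu => Finset.card_le_card ?_
      intro q hq
      simp only [Finset.mem_filter, Finset.mem_univ, true_and, Multiset.mem_toFinset] at hq ⊢
      exact ⟨hex X hX u hu q hq.1 hq.2, hq.2⟩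
    have hlow' : 3 * L.card ≤ ((L.map Finset.val).sum.map f).sum := by
      clear hcard hsum hinv hbad hex
      induction L using Multiset.induction_on with
      | empty => simp
      | cons X L ihL =>
        have h1 := hlow X (by simp)
        have h2 := ihL fun Y hY => hlow Y (by simp [hY])
        rw [Multiset.map_cons, Multiset.sum_cons, Multiset.map_add, Multiset.sum_add,
          Multiset.card_cons]
        omega
    have hup : ((L.map Finset.val).sum.map f).sum ≤ ∑ u : V, f u := by
      change _ ≤ ((Finset.univ : Finset V).val.map f).sum
      rw [← hsum]
      simp only [Multiset.map_add, Multiset.sum_add]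
      omega
    have hdc : ∑ u : V, f u = ∑ q ∈ M.toFinset, (Finset.univ.filter (G.Adj q)).card := by
      refine (Finset.sum_card_bipartiteAbove_eq_sum_card_bipartiteBelow (s := Finset.univ)
        (t := M.toFinset) G.Adj).trans ?_
      refine Finset.sum_congr rfl fun q _ => ?_
      congr 1
      ext u
      simp [Finset.mem_bipartiteBelow, G.adj_comm]
    rw [hdc, Finset.sum_congr rfl (fun q _ => h3 q), Finset.sum_const, smul_eq_mul] at hup
    have hM := Multiset.toFinset_card_le M
    omega

theorem no_bad {V : Type*} [Fintype V] [DecidableEq V] {G : SimpleGraph V}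
    [DecidableRel G.Adj] (h3 : ∀ v, (Finset.univ.filter (G.Adj v)).card = 3)
    {F : Multiset (Finset V)} (h : OptForest G F) {X : Finset V} (hX : X ∈ F) :
    ¬ BadSet G X := by
  intro hb
  obtain ⟨R, rfl⟩ := Multiset.exists_cons_of_mem hX
  refine reach_false h3 _ R {X} 0 rfl ?_ (by simp) ?_ ?_
  · intro Y hY
    rw [Multiset.mem_singleton] at hY
    exact hY ▸ hb
  · have := h.1.2
    simpa using this
  · intro Y hY
    rw [Multiset.mem_singleton] at hY
    subst hY
    exact ⟨0, by simpa using h, by simp⟩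

theorem exists_signs {α : Type*} [DecidableEq α] (S : Finset α) (w : α → ℤ)
    (hw : ∀ x, w x = 0 ∨ w x = 1) :
    ∃ e : α → ℤ, (∀ x, e x = 1 ∨ e x = -1) ∧ |∑ x ∈ S, e x * w x| ≤ 1 := by
  induction S using Finset.induction_on with
  | empty => exact ⟨fun _ => 1, fun _ => Or.inl rfl, by simp⟩
  | insert a S ha ih =>
    obtain ⟨e, he, hS⟩ := ih
    have key : ∀ s : ℤ, ∑ x ∈ insert a S, (Function.update e a s) x * w x =
        s * w a + ∑ x ∈ S, e x * w x := by
      intro s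
      rw [Finset.sum_insert ha, Function.update_self]
      congr 1
      refine Finset.sum_congr rfl fun x hx => ?_
      rw [Function.update_of_ne]
      rintro rfl
      exact ha hx
    have hupd : ∀ s : ℤ, (s = 1 ∨ s = -1) → ∀ x, Function.update e a s x = 1 ∨
        Function.update e a s x = -1 := by
      intro s hs x
      by_cases hx : x = a
      · subst hx; simpa using hs
      · rw [Function.update_of_ne hx]; exact he x
    rw [abs_le] at hS
    by_cases hpos : 0 ≤ ∑ x ∈ S, e x * w x
    · refine ⟨Function.update e a (-1), hupd _ (Or.inr rfl), ?_⟩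
      rw [key, abs_le]
      rcases hw a with h | h <;> rw [h] <;> constructor <;> omega
    · refine ⟨Function.update e a 1, hupd _ (Or.inl rfl), ?_⟩
      rw [key, abs_le]
      rcases hw a with h | h <;> rw [h] <;> constructor <;> omega

theorem PForest.unique {V : Type*} [Fintype V] {G : SimpleGraph V} {F : Multiset (Finset V)}
    (h : PForest G F) {X Y : Finset V} (hX : X ∈ F) (hY : Y ∈ F) {v : V} (hvX : v ∈ X)
    (hvY : v ∈ Y) : X = Y := by
  by_contra hne
  obtain ⟨R, rfl⟩ := Multiset.exists_cons_of_mem hX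
  rcases Multiset.mem_cons.1 hY with rfl | hY
  · exact hne rfl
  obtain ⟨R, rfl⟩ := Multiset.exists_cons_of_mem hY
  have hs := h.2
  simp only [Multiset.map_cons, Multiset.sum_cons] at hs
  have hnd := (Finset.univ : Finset V).nodup
  rw [← hs] at hnd
  exact Multiset.disjoint_left.1 (Multiset.nodup_add.1 hnd).2.2 hvX
    (Multiset.mem_add.2 (Or.inl hvY))

theorem HPath.from_end {V : Type*} {G : SimpleGraph V} {X : Finset V} {p : List V} {x : V} {i : ℕ}
    (h : HPath G X p) (hi : p[i]? = some x) (he : i = 0 ∨ i + 1 = p.length) :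
    ∃ l, HPath G X (x :: l) := by
  rcases he with rfl | he
  · rcases p with _ | ⟨y, l⟩
    · simp at hi
    · simp at hi
      subst hi
      exact ⟨l, h⟩
  · have h' := h.reverse
    have hl : p.reverse[0]? = some x := by
      rw [List.getElem?_reverse (by omega), ← hi]
      congr 1
      omega
    rcases hp : p.reverse with _ | ⟨y, l⟩
    · rw [hp] at hl; simp at hl
    · rw [hp] at hl h'
      simp at hl
      subst hl
      exact ⟨l, h'⟩

theorem HPath.adj_succ {V : Type*} {G : SimpleGraph V} {X : Finset V} {p : List V} {x y : V} {i : ℕ}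
    (h : HPath G X p) (hi : p[i]? = some x) (hj : p[i + 1]? = some y) : G.Adj x y := by
  obtain ⟨h1, rfl⟩ := List.getElem?_eq_some_iff.1 hi
  obtain ⟨h2, rfl⟩ := List.getElem?_eq_some_iff.1 hj
  exact List.isChain_iff_getElem.1 h.2.1 i h2

theorem main_coloring {V : Type*} [Fintype V] [DecidableEq V] {G : SimpleGraph V}
    [DecidableRel G.Adj] (h3 : ∀ v, (Finset.univ.filter (G.Adj v)).card = 3) :
    ∃ col : V → ℤ, (∀ v, col v = 1 ∨ col v = -1) ∧ |∑ v, col v| ≤ 1 ∧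
      (∀ v a b d, G.Adj v a → G.Adj v b → G.Adj v d → a ≠ b → a ≠ d → b ≠ d →
        col a = col v → col b = col v → col d = col v → False) ∧
      (∀ x y a b a' b', G.Adj x y → col x = col y → G.Adj x a → G.Adj x b → a ≠ b →
        col a = col x → col b = col x → G.Adj y a' → G.Adj y b' → a' ≠ b' →
        col a' = col y → col b' = col y → False) := by
  obtain ⟨F, hF⟩ := exists_optForest G
  have hfine : ∀ X ∈ F, ∃ p, FinePath G X p := by
    intro X hX
    by_contra hcon
    exact no_bad h3 hF hX ⟨hF.1.1 X hX, hcon⟩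
  choose! P hP using hfine
  have hpart : ∀ v : V, ∃ X ∈ F, v ∈ X := by
    intro v
    have hmem : v ∈ (F.map Finset.val).sum := by rw [hF.1.2]; simp
    obtain ⟨m, hm, hqm⟩ := Multiset.mem_join.1 hmem
    obtain ⟨Q, hQ, rfl⟩ := Multiset.mem_map.1 hm
    exact ⟨Q, hQ, hqm⟩
  choose part hpF hpm using hpart
  obtain ⟨e, he, hesum⟩ := exists_signs F.toFinset (fun X => if Even X.card then 0 else 1)
    (fun X => by split_ifs <;> simp)
  have hidx : ∀ v, ∃ i : ℕ, (P (part v))[i]? = some v := fun v => by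
    have := ((hP _ (hpF v)).1.mem_iff v).2 (hpm v)
    obtain ⟨i, hi, h⟩ := List.getElem_of_mem this
    exact ⟨i, by rw [List.getElem?_eq_getElem hi, h]⟩
  choose idx hidx using hidx
  have hkey : ∀ X ∈ F, ∀ (i : ℕ) (v : V), (P X)[i]? = some v → part v = X ∧ idx v = i := by
    intro X hX i v hi
    have hv : v ∈ X := ((hP X hX).1.mem_iff v).1 (List.mem_of_getElem? hi)
    have hpX := hF.1.unique (hpF v) hX (hpm v) hv
    refine ⟨hpX, ?_⟩
    have h1 := hidx v
    rw [hpX] at h1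
    have hlt : idx v < (P X).length := (List.getElem?_eq_some_iff.1 h1).1
    exact (List.getElem?_inj hlt (hP X hX).1.nodup).1 (h1.trans hi.symm)
  set col : V → ℤ := fun v => e (part v) * (-1) ^ idx v with hcol
  have hcolat : ∀ X ∈ F, ∀ (i : ℕ) (v : V), (P X)[i]? = some v → col v = e X * (-1) ^ i := by
    intro X hX i v hi
    obtain ⟨h1, h2⟩ := hkey X hX i v hi
    simp only [hcol, h1, h2]
  have hpm1 : ∀ v, col v = 1 ∨ col v = -1 := by
    intro v
    simp only [hcol]
    rcases he (part v) with h | h <;> rcases neg_one_pow_eq_or ℤ (idx v) with h' | h' <;>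
      rw [h, h'] <;> simp
  have hne0 : ∀ v, col v ≠ 0 := fun v => by rcases hpm1 v with h | h <;> rw [h] <;> decide
  -- consecutive vertices get opposite colours
  have hopp : ∀ v (j : ℕ) w, (P (part v))[j]? = some w → (j = idx v + 1 ∨ idx v = j + 1) →
      G.Adj v w ∧ col w ≠ col v := by
    intro v j w hw hj
    have h1 := hcolat _ (hpF v) j w hw
    have h2 := hcolat _ (hpF v) _ v (hidx v)
    have h0 := hne0 v
    rcases hj with rfl | hj
    · refine ⟨(hP _ (hpF v)).1.adj_succ (hidx v) hw, ?_⟩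
      rw [pow_succ] at h1
      intro h
      rw [h] at h1
      apply h0
      linarith
    · have h3 := hidx v
      rw [hj] at h3 h2
      refine ⟨((hP _ (hpF v)).1.adj_succ hw h3).symm, ?_⟩
      rw [pow_succ] at h2
      intro h
      rw [h] at h1
      apply h0
      linarith
  have hnext : ∀ v, idx v + 1 ≠ (P (part v)).length →
      ∃ w, (P (part v))[idx v + 1]? = some w ∧ G.Adj v w ∧ col w ≠ col v := by
    intro v hv
    have hlt : idx v < (P (part v)).length := (List.getElem?_eq_some_iff.1 (hidx v)).1
    have hlt' : idx v + 1 < (P (part v)).length := by omega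
    exact ⟨_, List.getElem?_eq_getElem hlt',
      hopp v _ _ (List.getElem?_eq_getElem hlt') (Or.inl rfl)⟩
  have hprev : ∀ v, idx v ≠ 0 →
      ∃ w, (P (part v))[idx v - 1]? = some w ∧ G.Adj v w ∧ col w ≠ col v := by
    intro v hv
    have hlt : idx v < (P (part v)).length := (List.getElem?_eq_some_iff.1 (hidx v)).1
    have hlt' : idx v - 1 < (P (part v)).length := by omega
    exact ⟨_, List.getElem?_eq_getElem hlt',
      hopp v _ _ (List.getElem?_eq_getElem hlt') (Or.inr (by omega))⟩
  have hend : ∀ v a b, G.Adj v a → G.Adj v b → a ≠ b → col a = col v → col b = col v →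
      idx v = 0 ∨ idx v + 1 = (P (part v)).length := by
    intro v a b ha hb hab hca hcb
    by_contra hcon
    push Not at hcon
    obtain ⟨w, hw, hvw, hcw⟩ := hprev v hcon.1
    obtain ⟨z, hz, hvz, hcz⟩ := hnext v hcon.2
    have hwz : w ≠ z := by
      rintro rfl
      have h1 := (hkey _ (hpF v) _ _ hw).2
      have h2 := (hkey _ (hpF v) _ _ hz).2
      omega
    refine four_nbrs h3 ha hb hvw hvz hab ?_ ?_ ?_ ?_ hwz
    · rintro rfl; exact hcw hca
    · rintro rfl; exact hcz hca
    · rintro rfl; exact hcw hcb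
    · rintro rfl; exact hcz hcb
  have hheadlast : ∀ x y a b, part x = part y → idx x = 0 → idx y + 1 = (P (part y)).length →
      G.Adj x y → col x = col y → G.Adj x a → G.Adj x b → a ≠ b → col a = col x →
      col b = col x → False := by
    intro x y a b hpart hix hiy hadj hcxy ha hb hab hca hcb
    obtain ⟨hHP, hlen, hor⟩ := hP _ (hpF x)
    have hx := hidx x
    have hy := hidx y
    rw [← hpart] at hy hiy
    have cx := hcolat _ (hpF x) _ _ hx
    have cy := hcolat _ (hpF x) _ _ hy
    rw [hix, pow_zero, mul_one] at cx
    have h0 := hne0 x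
    rcases hor with hev | hor
    · have hodd : Odd (idx y) := by
        rw [← hiy] at hev
        by_contra hc
        rw [Nat.not_odd_iff_even] at hc
        exact (Nat.not_even_iff_odd.2 hc.add_one) hev
      rw [hodd.neg_one_pow, ← hcxy, ← cx] at cy
      apply h0
      linarith
    · have hxh : x ∈ (P (part x)).head? := by
        rw [Option.mem_def, List.head?_eq_getElem?, ← hix]
        exact hx
      have hyl : y ∈ (P (part x)).getLast? := by
        rw [Option.mem_def, List.getLast?_eq_getElem?, ← hiy]
        exact hy
      have hall := hor x hxh y hyl hadj
      have hcontr : ∀ w, G.Adj x w → w ≠ y → col w = col x → False := by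
        intro w hw hwy hcw
        obtain ⟨i, hi, hiw⟩ := hall w hw hwy
        have cw := hcolat _ (hpF x) _ _ hiw
        rw [hi.neg_one_pow, ← cx, hcw] at cw
        apply h0
        linarith
      by_cases hay : a = y
      · exact hcontr b hb (fun h => hab (hay.trans h.symm)) hcb
      · exact hcontr a ha hay hca
  refine ⟨col, hpm1, ?_, ?_, ?_⟩
  · have hsum : ∑ v, col v = ∑ X ∈ F.toFinset, e X * (if Even X.card then 0 else 1) := by
      rw [← Finset.sum_fiberwise_of_maps_to (s := Finset.univ) (t := F.toFinset) (g := part)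
        (fun v _ => Multiset.mem_toFinset.2 (hpF v))]
      refine Finset.sum_congr rfl fun X hX => ?_
      have hX' := Multiset.mem_toFinset.1 hX
      have hfil : Finset.univ.filter (fun v => part v = X) = X := by
        ext v
        simp only [Finset.mem_filter, Finset.mem_univ, true_and]
        constructor
        · rintro rfl; exact hpm v
        · intro hv; exact hF.1.unique (hpF v) hX' (hpm v) hv
      rw [hfil]
      have hHP := (hP X hX').1
      have hmap : (P X).map col = (List.range X.card).map (fun i => e X * (-1) ^ i) := by
        apply List.ext_getElem
        · simp [hHP.length_eq]
        · intro i h1 h2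
          simp only [List.getElem_map, List.getElem_range]
          rw [List.length_map] at h1
          exact hcolat X hX' i _ (List.getElem?_eq_getElem h1)
      change (X.val.map col).sum = _
      rw [← hHP.2.2, Multiset.map_coe, Multiset.sum_coe, hmap, ← neg_one_geom_sum, Finset.mul_sum,
        Finset.sum_range]
      rw [← Finset.sum_range (fun i => e X * (-1) ^ i)]
      rfl
    rw [hsum]
    exact hesum
  · intro v a b d ha hb hd hab had hbd hca hcb hcd
    have hlen := (hP _ (hpF v)).2.1
    obtain ⟨w, hvw, hcw⟩ : ∃ w, G.Adj v w ∧ col w ≠ col v := by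
      by_cases h0 : idx v = 0
      · obtain ⟨w, -, h⟩ := hnext v (by omega)
        exact ⟨w, h⟩
      · obtain ⟨w, -, h⟩ := hprev v h0
        exact ⟨w, h⟩
    refine four_nbrs h3 ha hb hd hvw hab had ?_ hbd ?_ ?_
    · rintro rfl; exact hcw hca
    · rintro rfl; exact hcw hcb
    · rintro rfl; exact hcw hcd
  · intro x y a b a' b' hxy hcxy ha hb hab hca hcb ha' hb' hab' hca' hcb'
    have hxe := hend x a b ha hb hab hca hcb
    have hye := hend y a' b' ha' hb' hab' hca' hcb'
    by_cases hpp : part x = part y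
    · have hxi := hidx x
      have hyi := hidx y
      rw [← hpp] at hyi hye
      have hne : idx x ≠ idx y := by
        intro h
        rw [h, hyi] at hxi
        exact hxy.ne (Option.some.inj hxi).symm
      rcases hxe with hx0 | hx1
      · rcases hye with hy0 | hy1
        · omega
        · exact hheadlast x y a b hpp hx0 (hpp ▸ hy1) hxy hcxy ha hb hab hca hcb
      · rcases hye with hy0 | hy1
        · exact hheadlast y x a' b' hpp.symm hy0 hx1 hxy.symm hcxy.symm ha' hb' hab' hca' hcb'
        · omega
    · obtain ⟨l, hl⟩ := (hP _ (hpF x)).1.from_end (hidx x) hxe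
      obtain ⟨l', hl'⟩ := (hP _ (hpF y)).1.from_end (hidx y) hye
      obtain ⟨R, hR⟩ := Multiset.exists_cons_of_mem (hpF x)
      have hy := hpF y
      rw [hR] at hy
      rcases Multiset.mem_cons.1 hy with h | hy
      · exact hpp h.symm
      obtain ⟨R', rfl⟩ := Multiset.exists_cons_of_mem hy
      have hF' := hF
      rw [hR] at hF'
      refine hF'.no_merge (p := (x :: l).reverse ++ (y :: l')) ?_ ?_
      · refine List.IsChain.append (chain_reverse hl.2.1) hl'.2.1 ?_
        intro s hs t ht
        obtain rfl : x = s := by simpa using hs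
        obtain rfl : y = t := by simpa using ht
        exact hxy
      · rw [← Multiset.coe_add, hl.reverse.2.2, hl'.2.2]

end WeakBisectionProof

/-- Every cubic graph admits a 5-weak bisection. -/
theorem stmt15 {V : Type*} [Fintype V] (G : SimpleGraph V) (hG : IsCubic G) :
    ∃ S : Set V, IsWeakBisection G 5 S := by
  classical
  have hdeg : ∀ v, G.degree v = 3 := by
    intro v
    rw [← hG v, ← card_neighborSet_eq_degree, Nat.card_eq_fintype_card]
  have h3 : ∀ v, (Finset.univ.filter (G.Adj v)).card = 3 := by
    intro v
    rw [← hdeg v, ← card_neighborFinset_eq_degree, neighborFinset_eq_filter]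
  obtain ⟨col, hpm, hsum, hloc1, hloc2⟩ := main_coloring h3
  refine ⟨{v | col v = 1}, ?_, ?_, ?_⟩
  · have hc1 : Nat.card {v | col v = 1} = (Finset.univ.filter fun v => col v = 1).card := by
      rw [Nat.card_eq_fintype_card, Fintype.card_subtype]
      rfl
    have hc2 : Nat.card ({v | col v = 1}ᶜ : Set V) =
        (Finset.univ.filter fun v => ¬ col v = 1).card := by
      rw [Nat.card_eq_fintype_card, Fintype.card_subtype]
      rfl
    rw [hc1, hc2]
    have htot := Finset.card_filter_add_card_filter_not (s := (Finset.univ : Finset V))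
      (fun v => col v = 1)
    have hsum2 : ∑ v, col v = ((Finset.univ.filter fun v => col v = 1).card : ℤ) -
        ((Finset.univ.filter fun v => ¬ col v = 1).card : ℤ) := by
      have : ∀ v, col v = if col v = 1 then (1 : ℤ) else -1 := by
        intro v
        rcases hpm v with h | h <;> rw [h] <;> simp
      rw [Finset.sum_congr rfl fun v _ => this v, Finset.sum_ite]
      simp
      ring
    have hev := G.sum_degrees_eq_twice_card_edges
    rw [Finset.sum_congr rfl fun v _ => hdeg v, Finset.sum_const, smul_eq_mul] at hev
    rw [hsum2, abs_le] at hsum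
    omega
  · apply monoOK_of_local
    · intro v a b d hv ha hb hd hva hvb hvd hab had hbd
      simp only [Set.mem_ofPred_eq] at hv ha hb hd
      exact hloc1 v a b d hva hvb hvd hab had hbd (ha.trans hv.symm) (hb.trans hv.symm)
        (hd.trans hv.symm)
    · intro x y a b a' b' hx hy ha hb ha' hb' hxy hxa hxb hab hya hyb hab'
      simp only [Set.mem_ofPred_eq] at hx hy ha hb ha' hb'
      exact hloc2 x y a b a' b' hxy (hx.trans hy.symm) hxa hxb hab (ha.trans hx.symm)
        (hb.trans hx.symm) hya hyb hab' (ha'.trans hy.symm) (hb'.trans hy.symm)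
  · have hneg : ∀ v, v ∈ ({v | col v = 1}ᶜ : Set V) → col v = -1 := fun v hv =>
      (hpm v).resolve_left hv
    apply monoOK_of_local
    · intro v a b d hv ha hb hd hva hvb hvd hab had hbd
      replace hv := hneg _ hv
      exact hloc1 v a b d hva hvb hvd hab had hbd ((hneg _ ha).trans hv.symm)
        ((hneg _ hb).trans hv.symm) ((hneg _ hd).trans hv.symm)
    · intro x y a b a' b' hx hy ha hb ha' hb' hxy hxa hxb hab hya hyb hab'
      replace hx := hneg _ hx
      replace hy := hneg _ hy
      exact hloc2 x y a b a' b' hxy (hx.trans hy.symm) hxa hxb hab ((hneg _ ha).trans hx.symm)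
        ((hneg _ hb).trans hx.symm) hya hyb hab' ((hneg _ ha').trans hy.symm)
        ((hneg _ hb').trans hy.symm)
end

section
/- Every cubic graph that admits a perfect matching admits a 5-weak bisection. -/
open SimpleGraph

/-- A graph of maximum degree two in which every edge has a leaf end is a forest of small stars. -/
lemma star_forest {W : Type*} [Finite W] (H : SimpleGraph W)
    (hleaf : ∀ x y, H.Adj x y → (∀ z, H.Adj x z → z = y) ∨ (∀ z, H.Adj y z → z = x))
    (hdeg : ∀ x a b d, H.Adj x a → H.Adj x b → H.Adj x d → a = b ∨ a = d ∨ b = d) :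
    H.IsAcyclic ∧ ∀ c : H.ConnectedComponent, Nat.card c.supp ≤ 3 := by
  have key : ∀ u v, H.Adj u v → (∀ z, H.Adj u z → z = v) →
      ¬ (H \ fromEdgeSet {s(u, v)}).Reachable u v := by
    rintro u v huv hl ⟨p⟩
    cases p with
    | nil => exact huv.ne rfl
    | cons h q =>
      rw [sdiff_adj] at h
      have := hl _ h.1
      subst this
      exact h.2 (by simp [huv.ne])
  constructor
  · rw [isAcyclic_iff_forall_adj_isBridge]
    intro u v huv
    rw [isBridge_iff]
    rcases hleaf u v huv with h | h
    · exact key u v huv h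
    · intro hr
      apply key v u huv.symm h
      rw [Sym2.eq_swap]
      exact hr.symm
  · intro c
    induction c using ConnectedComponent.ind with
    | h x =>
    obtain ⟨w, hw, hc⟩ : ∃ w, H.Reachable w x ∧ ∀ z, H.Adj w z → ∀ t, H.Adj z t → t = w := by
      by_cases hx : ∀ z, H.Adj x z → ∀ t, H.Adj z t → t = x
      · exact ⟨x, Reachable.refl _, hx⟩
      · push Not at hx
        obtain ⟨z, hxz, t, hzt, htx⟩ := hx
        refine ⟨z, hxz.symm.reachable, ?_⟩
        intro y hzy s hys
        rcases hleaf z y hzy with h | h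
        · exact absurd ((h t hzt).trans (h x hxz.symm).symm) htx
        · exact h s hys
    have hsub : (H.connectedComponentMk x).supp ⊆ insert w (H.neighborSet w) := by
      intro y hy
      rw [ConnectedComponent.mem_supp_iff, ConnectedComponent.eq] at hy
      have hr : H.Reachable y w := hy.trans hw.symm
      obtain ⟨p⟩ := hr
      clear hy
      induction p with
      | nil => simp
      | cons h q ih =>
        rcases ih hw hc with h' | h'
        · subst h'; right; exact h.symm
        · left; exact hc _ h' _ h.symm
    have h2 : (H.neighborSet w).ncard ≤ 2 := by
      by_contra hcon
      push Not at hcon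
      obtain ⟨a, ha, b, hb, d, hd, h1, h2, h3⟩ := (Set.two_lt_ncard).1 hcon
      rcases hdeg w a b d ha hb hd with h | h | h <;> contradiction
    rw [Nat.card_coe_set_eq]
    calc _ ≤ (insert w (H.neighborSet w)).ncard := Set.ncard_le_ncard hsub (Set.toFinite _)
      _ ≤ (H.neighborSet w).ncard + 1 := Set.ncard_insert_le _ _
      _ ≤ 3 := by omega

/-- Two fixed-point-free involutions admit a common proper two-colouring. -/
lemma two_invol_color {X : Type*} (m n : X → X) (hm : ∀ x, m (m x) = x) (hn : ∀ x, n (n x) = x)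
    (hm' : ∀ x, m x ≠ x) (hn' : ∀ x, n x ≠ x) :
    ∃ c : X → Prop, ∀ x, (c (m x) ↔ ¬ c x) ∧ (c (n x) ↔ ¬ c x) := by
  let M : Equiv.Perm X := ⟨m, m, hm, hm⟩
  let N : Equiv.Perm X := ⟨n, n, hn, hn⟩
  have hMM : M⁻¹ = M := rfl
  have hNN : N⁻¹ = N := rfl
  let p : Equiv.Perm X := M * N
  have hconj : M * p * M⁻¹ = p⁻¹ := by
    simp only [p, mul_inv_rev, hNN, hMM]
    rw [← mul_assoc]
    nth_rewrite 1 [← hMM]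
    simp
  have hconjk : ∀ (k : ℤ) x, M ((p ^ k) x) = (p ^ (-k)) (M x) := by
    intro k x
    have : M * p ^ k = p ^ (-k) * M := by
      rw [zpow_neg, ← inv_zpow, ← hconj, conj_zpow]; simp
    exact congrArg (fun f : Equiv.Perm X => f x) this
  let S := Equiv.Perm.SameCycle.setoid p
  let q : X → Quotient S := fun x => Quotient.mk S x
  have hq : ∀ x y, q x = q y ↔ p.SameCycle x y := fun x y => Quotient.eq
  have hne : ∀ x, q x ≠ q (m x) := by
    intro x h
    obtain ⟨k, hk⟩ := (hq _ _).1 h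
    obtain ⟨j, hj | hj⟩ := Int.even_or_odd' k
    · apply hm' ((p ^ j) x)
      change M ((p ^ j) x) = _
      rw [hconjk]
      change (p ^ (-j)) (m x) = _
      rw [← hk, ← Equiv.Perm.mul_apply, ← zpow_add, hj]
      congr 2; ring
    · apply hn' ((p ^ j) x)
      have h1 : M ((p ^ j) x) = p ((p ^ j) x) := by
        rw [hconjk]
        change (p ^ (-j)) (m x) = _
        rw [← hk, ← Equiv.Perm.mul_apply, ← zpow_add, hj, ← Equiv.Perm.mul_apply, ← zpow_one_add]
        congr 2; ring
      exact (M.injective h1).symm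
  have hmn : ∀ x, q (m (n x)) = q x := by
    intro x
    rw [eq_comm, hq]
    exact ⟨1, by simp [p]; rfl⟩
  have hnm : ∀ x, q (n x) = q (m x) := by
    intro x
    rw [eq_comm, hq]
    refine ⟨-1, ?_⟩
    simp only [p, zpow_neg, zpow_one, mul_inv_rev, hMM, hNN, Equiv.Perm.mul_apply]
    change n (m (m x)) = n x
    rw [hm]
  classical
  let _ := linearOrderOfSTO (WellOrderingRel (α := Quotient S))
  refine ⟨fun x => q x < q (m x), fun x => ⟨?_, ?_⟩⟩
  · simp only [hm, not_lt]
    exact ⟨le_of_lt, fun h => lt_of_le_of_ne h (hne x).symm⟩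
  · simp only [hmn, hnm, not_lt]
    exact ⟨le_of_lt, fun h => lt_of_le_of_ne h (hne x).symm⟩

/-- The same when the second involution may have fixed points. -/
lemma two_invol_color' {X : Type*} (m n : X → X) (hm : ∀ x, m (m x) = x) (hn : ∀ x, n (n x) = x)
    (hm' : ∀ x, m x ≠ x) :
    ∃ c : X → Prop, ∀ x, (c (m x) ↔ ¬ c x) ∧ (n x ≠ x → (c (n x) ↔ ¬ c x)) := by
  classical
  obtain ⟨c, hc⟩ := two_invol_color (X := X × Bool) (fun x => (m x.1, x.2))
    (fun x => if n x.1 = x.1 then (x.1, !x.2) else (n x.1, x.2))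
    (by rintro ⟨x, b⟩; simp [hm])
    (by
      rintro ⟨x, b⟩
      by_cases h : n x = x
      · simp [h]
      · simp [h, hn, Ne.symm h])
    (by rintro ⟨x, b⟩; simp [hm'])
    (by
      rintro ⟨x, b⟩
      by_cases h : n x = x <;> simp [h])
  refine ⟨fun x => c (x, false), fun x => ⟨(hc (x, false)).1, fun h => ?_⟩⟩
  simpa [h] using (hc (x, false)).2

/-- A maximal matching, as an involution. -/
lemma exists_max_matching {V : Type*} [Finite V] (F : SimpleGraph V) :
    ∃ n : V → V, (∀ v, n (n v) = v) ∧ (∀ v, n v ≠ v → F.Adj v (n v)) ∧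
      ∀ u v, F.Adj u v → n u = u → n v ≠ v := by
  classical
  let T := {n : V → V // (∀ v, n (n v) = v) ∧ (∀ v, n v ≠ v → F.Adj v (n v))}
  have : Nonempty T := ⟨⟨id, by simp, by simp⟩⟩
  obtain ⟨⟨n, h1, h2⟩, hmax⟩ := Finite.exists_max (fun t : T => {v | t.1 v ≠ v}.ncard)
  refine ⟨n, h1, h2, fun u v huv hu hv => ?_⟩
  let n' : V → V := fun w => if w = u then v else if w = v then u else n w
  have hne := huv.ne
  have hu' : ∀ w, n w = u → w = u := fun w hw => by rw [← h1 w, hw, hu]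
  have hv' : ∀ w, n w = v → w = v := fun w hw => by rw [← h1 w, hw, hv]
  have h1' : ∀ w, n' (n' w) = w := by intro w; simp only [n']; grind
  have h2' : ∀ w, n' w ≠ w → F.Adj w (n' w) := by
    intro w
    simp only [n']
    split_ifs with ha hb
    · subst ha; exact fun _ => huv
    · subst hb; exact fun _ => huv.symm
    · exact h2 w
  have := hmax ⟨n', h1', h2'⟩
  refine absurd this (not_le.2 (Set.ncard_lt_ncard ?_ (Set.toFinite _)))
  refine (Set.ssubset_iff_of_subset ?_).2 ⟨u, ?_, ?_⟩
  · intro w hw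
    simp only [Set.mem_setOf_eq, n'] at hw ⊢
    grind
  · simp [n', hne.symm]
  · simp [hu]

/-- Every cubic graph with a perfect matching admits a 5-weak bisection. -/
theorem stmt16 {V : Type*} [Fintype V] (G : SimpleGraph V) (hG : IsCubic G)
    (hM : ∃ M : G.Subgraph, M.IsPerfectMatching) :
    ∃ S : Set V, IsWeakBisection G 5 S := by
  classical
  obtain ⟨M, hM⟩ := hM
  rw [Subgraph.isPerfectMatching_iff] at hM
  choose m hm hmu using hM
  have hmm : ∀ v, m (m v) = v := fun v => (hmu (m v) v (hm v).symm).symm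
  have hadj : ∀ v, G.Adj v (m v) := fun v => (hm v).adj_sub
  obtain ⟨n, hnn, hnF, hmax⟩ := exists_max_matching (G \ M.spanningCoe)
  have hnG : ∀ v, n v ≠ v → G.Adj v (n v) := fun v h => (hnF v h).1
  have hnm : ∀ v, n v ≠ m v := by
    intro v h
    have := hnF v (by rw [h]; exact (hadj v).ne')
    rw [h, sdiff_adj] at this
    exact this.2 (hm v)
  obtain ⟨c, hc⟩ := two_invol_color' m n hmm hnn (fun v => (hadj v).ne')
  have hcard : ∀ v a b d e : V, G.Adj v a → G.Adj v b → G.Adj v d → G.Adj v e →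
      a = b ∨ a = d ∨ a = e ∨ b = d ∨ b = e ∨ d = e := by
    intro v a b d e ha hb hd he
    by_contra hcon
    push Not at hcon
    obtain ⟨h1, h2, h3, h4, h5, h6⟩ := hcon
    have hs : (↑({a, b, d, e} : Finset V) : Set V) ⊆ G.neighborSet v := by
      intro x hx
      simp at hx
      rcases hx with rfl | rfl | rfl | rfl <;> assumption
    have h := Set.ncard_le_ncard hs (Set.toFinite _)
    have h3' := hG v
    rw [Nat.card_coe_set_eq] at h3'
    rw [h3', Set.ncard_coe_finset] at h
    simp [h1, h2, h3, h4, h5, h6] at h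
  have hmono : ∀ S : Set V, (∀ u ∈ S, ∀ v ∈ S, (c u ↔ c v)) → MonoOK G 3 S := by
    intro S hS
    have nem : ∀ x y : S, (y : V) ≠ m x := by
      intro x y h
      have h1 := hS x x.2 y y.2
      have h2 := (hc x).1
      rw [h] at h1
      tauto
    have nen : ∀ x y : S, n x ≠ x → (y : V) ≠ n x := by
      intro x y hx h
      have h1 := hS x x.2 y y.2
      have h2 := (hc x).2 hx
      rw [h] at h1
      tauto
    have hcov : ∀ x y z : S, n x ≠ x → G.Adj x y → G.Adj x z → z = y := by
      intro x y z hx hy hz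
      have := hcard x (m x) (n x) y z (hadj x) (hnG x hx) hy hz
      have h1 := nem x y
      have h2 := nem x z
      have h3 := nen x y hx
      have h4 := nen x z hx
      have h5 := hnm x
      apply Subtype.ext
      grind
    apply star_forest
    · intro x y hxy
      have hxy' : G.Adj x y := hxy
      by_cases hx : n x = x
      · right
        intro z hz
        refine hcov y x z (hmax x y ⟨hxy', ?_⟩ hx) hxy'.symm hz
        intro h
        exact nem x y (hmu x y h)
      · left
        intro z hz
        exact hcov x y z hx hxy' hz
    · intro x a b d ha hb hd
      have := hcard x (m x) a b d (hadj x) ha hb hd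
      have h1 := nem x a
      have h2 := nem x b
      have h3 := nem x d
      simp only [Subtype.ext_iff]
      grind
  refine ⟨{v | c v}, ?_, hmono _ ?_, hmono _ ?_⟩
  · refine Nat.card_congr ⟨fun v => ⟨m v, ?_⟩, fun v => ⟨m v, ?_⟩, ?_, ?_⟩
    · have := v.2
      simp only [Set.mem_setOf_eq, Set.mem_compl_iff] at this ⊢
      rw [(hc v).1]; tauto
    · have := v.2
      simp only [Set.mem_setOf_eq, Set.mem_compl_iff] at this ⊢
      rw [(hc v).1]; exact this
    · intro v; exact Subtype.ext (hmm v)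
    · intro v; exact Subtype.ext (hmm v)
  · intro u hu v hv
    simp only [Set.mem_setOf_eq] at hu hv
    tauto
  · intro u hu v hv
    simp only [Set.mem_setOf_eq, Set.mem_compl_iff] at hu hv
    tauto
end

section
/- Let G be a cubic graph with a perfect matching M, and suppose the 2-factor T = E(G) \ M has exactly s odd cycle components (s is the oddness of this 2-factor). Then G admits a 5-weak bisection in which the number of monochromatic paths on 3 vertices is at most s. -/
open SimpleGraph

theorem two_inv_color {V : Type*} (m n : V → V) (hm : Function.Involutive m)
    (hn : Function.Involutive n) (hm' : ∀ v, m v ≠ v) (hn' : ∀ v, n v ≠ v) :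
    ∃ c : V → Bool, (∀ v, c (m v) = !c v) ∧ ∀ v, c (n v) = !c v := by
  classical
  let P : Equiv.Perm V := hm.toPerm m
  let Q : Equiv.Perm V := hn.toPerm n
  have hP : ∀ v, P v = m v := fun _ => rfl
  have hQ : ∀ v, Q v = n v := fun _ => rfl
  let f : Equiv.Perm V := P * Q
  have hf : ∀ v, f v = m (n v) := fun _ => rfl
  have hPP : P * P = 1 := by ext v; exact hm v
  have hQQ : Q * Q = 1 := by ext v; exact hn v
  have hPi : P⁻¹ = P := inv_eq_of_mul_eq_one_left hPP
  have hQi : Q⁻¹ = Q := inv_eq_of_mul_eq_one_left hQQ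
  have hfi : f⁻¹ = Q * P := by simp [f, hPi, hQi]
  have hsc : SemiconjBy P f f⁻¹ := by
    change P * f = f⁻¹ * P
    rw [hfi, mul_assoc, hPP, mul_one]
    change P * (P * Q) = Q
    rw [← mul_assoc, hPP, one_mul]
  have hz : ∀ (k : ℤ) (x : V), m ((f ^ k) x) = (f ^ (-k)) (m x) := by
    intro k x
    have := (hsc.zpow_right k)
    have h2 : P * f ^ k = f⁻¹ ^ k * P := this
    have h3 := congrArg (fun g : Equiv.Perm V => g x) h2
    simpa [inv_zpow', hP] using h3
  have hA : ∀ x y, f.SameCycle x y → f.SameCycle (m x) (m y) := by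
    rintro x y ⟨k, rfl⟩
    exact ⟨-k, (hz k x).symm⟩
  have hB : ∀ x, ¬ f.SameCycle x (m x) := by
    rintro x ⟨k, hk⟩
    have key : ∀ j : ℤ, (f ^ (k - j)) x = m ((f ^ j) x) := by
      intro j
      rw [hz, ← hk, ← Equiv.Perm.mul_apply, ← zpow_add]
      congr 2; ring
    rcases Int.even_or_odd' k with ⟨j, hj | hj⟩
    · have := key j
      rw [show k - j = j by omega] at this
      exact hm' _ this.symm
    · have := key j
      rw [show k - j = 1 + j by omega, zpow_add, zpow_one, Equiv.Perm.mul_apply, hf] at this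
      exact hn' _ (hm.injective this)
  let r : Setoid V :=
    { r := fun x y => f.SameCycle x y ∨ f.SameCycle (m x) y
      iseqv := by
        refine ⟨fun x => Or.inl (Equiv.Perm.SameCycle.refl _ _), ?_, ?_⟩
        · rintro x y (h | h)
          · exact Or.inl h.symm
          · right
            have := hA _ _ h
            rw [hm x] at this
            exact this.symm
        · rintro x y z (h | h) (h' | h')
          · exact Or.inl (h.trans h')
          · exact Or.inr ((hA _ _ h).trans h')
          · exact Or.inr (h.trans h')
          · left
            have := hA _ _ h
            rw [hm x] at this
            exact this.trans h' }
  let rep : V → V := fun v => (Quotient.mk r v).out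
  have hrep : ∀ v, f.SameCycle (rep v) v ∨ f.SameCycle (m (rep v)) v := fun v =>
    Quotient.exact (s := r) (Quotient.out_eq (Quotient.mk r v))
  have hr1 : ∀ v, rep (m v) = rep v := by
    intro v
    have : Quotient.mk r (m v) = Quotient.mk r v :=
      Quotient.sound (s := r) (Or.inr (by rw [hm v]))
    simp only [rep, this]
  have hr2 : ∀ v, rep (f v) = rep v := by
    intro v
    have : Quotient.mk r (f v) = Quotient.mk r v :=
      Quotient.sound (s := r) (Or.inl (Equiv.Perm.sameCycle_apply_left.2 (Equiv.Perm.SameCycle.refl _ _)))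
    simp only [rep, this]
  let c : V → Bool := fun v => decide (f.SameCycle (rep v) v)
  have hc1 : ∀ v, c (m v) = !c v := by
    intro v
    simp only [c, hr1]
    by_cases h : f.SameCycle (rep v) v
    · have : ¬ f.SameCycle (rep v) (m v) := fun h' => hB v (h.symm.trans h')
      simp [h, this]
    · have h2 := hA _ _ ((hrep v).resolve_left h)
      rw [hm] at h2
      simp [h, h2]
  have hc2 : ∀ v, c (f v) = c v := by
    intro v
    simp only [c, hr2, Equiv.Perm.sameCycle_apply_right]
  refine ⟨c, hc1, fun v => ?_⟩
  have h1 := hc2 v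
  rw [hf, hc1] at h1
  rw [← h1]; simp

theorem exists_good_inv {V : Type*} [Fintype V] (T : SimpleGraph V)
    (h2 : ∀ p a b c, T.Adj p a → T.Adj p b → T.Adj p c → a ≠ b → c = a ∨ c = b)
    (m : V → V) (hm : Function.Involutive m) (hm' : ∀ v, m v ≠ v) :
    ∃ n : V → V, Function.Involutive n ∧ (∀ v, n v ≠ v) ∧
      ∀ u v, ¬ T.Adj u (n u) → ¬ T.Adj v (n v) → T.Reachable u v → u = v := by
  classical
  let A : Finset (V → V) := Finset.univ.filter fun n => Function.Involutive n ∧ ∀ v, n v ≠ v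
  let g : (V → V) → Finset V := fun n => Finset.univ.filter fun v => T.Adj v (n v)
  have hAm : ∀ n, n ∈ A ↔ Function.Involutive n ∧ ∀ v, n v ≠ v := by simp [A]
  have hg : ∀ n v, v ∈ g n ↔ T.Adj v (n v) := by simp [g]
  obtain ⟨n₀, hn₀, hmax₀⟩ := A.exists_max_image (fun n => (g n).card) ⟨m, (hAm m).2 ⟨hm, hm'⟩⟩
  have step : ∀ n ∈ A, ∀ u p, T.Adj u p → ¬ T.Adj u (n u) → ∃ n' ∈ A,
      T.Adj u (n' u) ∧ T.Adj p (n' p) ∧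
      ∀ x, x ≠ n p → T.Adj x (n x) → T.Adj x (n' x) := by
    intro n hn u p hup hu
    obtain ⟨hi, hne⟩ := (hAm n).1 hn
    let s := Equiv.swap u (n p)
    have hss : ∀ x, s (s x) = x := fun x => Equiv.swap_apply_self _ _ x
    have hpu : p ≠ u := hup.ne'
    have hpn : p ≠ n p := (hne p).symm
    have hsp : s p = p := Equiv.swap_apply_of_ne_of_ne hpu hpn
    refine ⟨fun x => s (n (s x)), (hAm _).2 ⟨?_, ?_⟩, ?_, ?_, ?_⟩
    · intro x
      simp only [hss, hi (s x)]
    · intro x h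
      apply hne (s x)
      rw [← hss (n (s x)), h]
    · have : s u = n p := Equiv.swap_apply_left _ _
      simp only [this, hi p, hsp]; exact hup
    · have : s (n p) = u := Equiv.swap_apply_right _ _
      simp only [hsp, this]; exact hup.symm
    · intro x hx hxg
      have hxu : x ≠ u := by rintro rfl; exact hu hxg
      have hsx : s x = x := Equiv.swap_apply_of_ne_of_ne hxu hx
      by_cases hxp : x = p
      · subst hxp
        have : s (n x) = u := Equiv.swap_apply_right _ _
        simp only [hsp, this]; exact hup.symm
      · have h1 : n x ≠ u := by
          intro h
          apply hu
          rw [← h, hi x]; exact hxg.symm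
        have h3 : n x ≠ n p := fun h => hxp (hi.injective h)
        have : s (n x) = n x := Equiv.swap_apply_of_ne_of_ne h1 h3
        simp only [hsx, this]; exact hxg
  have main : ∀ d : ℕ, ∀ n ∈ A, (∀ n' ∈ A, (g n').card ≤ (g n).card) → ∀ u v,
      ¬ T.Adj u (n u) → ¬ T.Adj v (n v) → ∀ w : T.Walk u v, w.length = d → u = v := by
    intro d
    induction d using Nat.strong_induction_on with
    | _ d ih =>
    intro n hn hmax u v hu hv w hw
    by_contra huv
    cases w with
    | nil => exact huv rfl
    | @cons _ p _ hup rest =>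
    obtain ⟨n', hn', hu', hp', hx'⟩ := step n hn u p hup hu
    obtain ⟨hi, hne⟩ := (hAm n).1 hn
    by_cases hp : T.Adj p (n p)
    · have hnpu : n p ≠ u := by
        intro h; apply hu; rw [← h, hi p]; exact hp.symm
      cases rest with
      | nil => exact hv hp
      | @cons _ q _ hpq rest' =>
      rcases h2 p u (n p) q hup.symm hp hpq hnpu.symm with h | h
      · subst h
        exact huv (ih rest'.length (by simp at hw; omega) n hn hmax _ v hu hv rest' rfl)
      · subst h
        have hsub : insert u ((g n).erase (n p)) ⊆ g n' := by
          intro x hx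
          rw [Finset.mem_insert, Finset.mem_erase, hg] at hx
          rw [hg]
          rcases hx with rfl | ⟨hx1, hx2⟩
          · exact hu'
          · exact hx' x hx1 hx2
        have hqg : n p ∈ g n := by rw [hg, hi p]; exact hp.symm
        have hcard : (insert u ((g n).erase (n p))).card = (g n).card := by
          rw [Finset.card_insert_of_notMem, Finset.card_erase_add_one hqg]
          simp [hg, hu]
        have heq : insert u ((g n).erase (n p)) = g n' :=
          Finset.eq_of_subset_of_card_le hsub (by rw [hcard]; exact hmax n' hn')
        have hq' : ¬ T.Adj (n p) (n' (n p)) := by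
          rw [← hg, ← heq]; simp [hnpu]
        have hv' : ¬ T.Adj v (n' v) := by
          rw [← hg, ← heq]; simp [hg, hv, Ne.symm huv]
        have hmax' : ∀ n'' ∈ A, (g n'').card ≤ (g n').card := by
          rw [← heq, hcard]; exact hmax
        have := ih rest'.length (by simp at hw; omega) n' hn' hmax' _ v hq' hv' rest' rfl
        apply hv
        rw [← this, hi p]; exact hp.symm
    · have hsub : insert u (g n) ⊆ g n' := by
        intro x hx
        rw [Finset.mem_insert, hg] at hx
        rw [hg]
        rcases hx with rfl | hx
        · exact hu'
        · refine hx' x ?_ hx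
          rintro rfl
          apply hp
          rw [hi p] at hx; exact hx.symm
      have := Finset.card_le_card hsub
      rw [Finset.card_insert_of_notMem (by rw [hg]; exact hu)] at this
      have := hmax n' hn'
      omega
  obtain ⟨hi, hne⟩ := (hAm n₀).1 hn₀
  refine ⟨n₀, hi, hne, fun u v hu hv ⟨w⟩ => main _ n₀ hn₀ hmax₀ u v hu hv w rfl⟩

theorem comp_supp_sub {W : Type*} (H : SimpleGraph W) (A : Set W) (v : W) (hv : v ∈ A)
    (hA : ∀ x ∈ A, ∀ y, H.Adj x y → y ∈ A) : (H.connectedComponentMk v).supp ⊆ A := by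
  intro x hx
  have hr : H.Reachable v x := (ConnectedComponent.exact hx).symm
  obtain ⟨w⟩ := hr
  induction w with
  | nil => exact hv
  | cons h p ih => exact ih (hA _ hv _ h) (by
      exact ConnectedComponent.sound (Walk.reachable p).symm)

theorem star_struct {W : Type*} [Finite W] (H : SimpleGraph W) (B : Set W)
    (h1 : ∀ v ∉ B, (H.neighborSet v).ncard ≤ 1) (h2 : ∀ v, (H.neighborSet v).ncard ≤ 2)
    (h3 : ∀ u v, u ∈ B → v ∈ B → ¬ H.Adj u v) :
    H.IsAcyclic ∧ (∀ c : H.ConnectedComponent, Nat.card c.supp ≤ 3) ∧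
    ∀ c : H.ConnectedComponent, Nat.card c.supp = 3 → ∃ b ∈ B, H.connectedComponentMk b = c := by
  classical
  have h1' : ∀ v ∉ B, ∀ a b, H.Adj v a → H.Adj v b → a = b := by
    intro v hv a b ha hb
    exact (Set.ncard_le_one (Set.toFinite _)).1 (h1 v hv) a ha b hb
  have hcl : ∀ v, (∀ w, H.Adj v w → w ∉ B) →
      Nat.card (H.connectedComponentMk v).supp ≤ (H.neighborSet v).ncard + 1 := by
    intro v hv
    have := comp_supp_sub H (insert v (H.neighborSet v)) v (Set.mem_insert _ _) (by
      rintro x (rfl | hx) y hxy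
      · exact Or.inr hxy
      · left
        exact h1' x (hv x hx) _ _ hxy (H.adj_symm hx))
    calc _ = (H.connectedComponentMk v).supp.ncard := rfl
      _ ≤ _ := Set.ncard_le_ncard this (Set.toFinite _)
      _ ≤ _ := Set.ncard_insert_le _ _
  have hno : ∀ c : H.ConnectedComponent, (¬ ∃ b ∈ B, H.connectedComponentMk b = c) →
      Nat.card c.supp ≤ 2 := by
    intro c hc
    induction c using ConnectedComponent.ind with | _ v =>
    have := hcl v (fun w hw hwB => hc ⟨w, hwB, ConnectedComponent.sound hw.symm.reachable⟩)
    have := h1 v (fun hvB => hc ⟨v, hvB, rfl⟩)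
    omega
  refine ⟨?_, ?_, ?_⟩
  · have hcy : ∀ v (c : H.Walk v v), c.IsCycle → v ∈ B := by
      intro v c hc
      by_contra hv
      exact hc.snd_ne_penultimate (h1' v hv _ _ (c.adj_snd hc.not_nil)
        (c.adj_penultimate hc.not_nil).symm)
    intro v c hc
    have hs : c.snd ∈ c.support := c.getVert_mem_support 1
    exact h3 _ _ (hcy v c hc) (hcy _ _ (hc.rotate hs)) (c.adj_snd hc.not_nil)
  · intro c
    by_cases hc : ∃ b ∈ B, H.connectedComponentMk b = c
    · obtain ⟨b, hb, rfl⟩ := hc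
      have := hcl b (fun w hw hwB => h3 b w hb hwB hw)
      have := h2 b
      omega
    · have := hno c hc; omega
  · intro c hc
    by_contra h
    have := hno c h; omega

theorem odd_of_bad {V : Type*} [Fintype V] (T : SimpleGraph V) (n : V → V)
    (hi : Function.Involutive n) (hne : ∀ v, n v ≠ v)
    (hb : ∀ u v, ¬ T.Adj u (n u) → ¬ T.Adj v (n v) → T.Reachable u v → u = v)
    (v : V) (hv : ¬ T.Adj v (n v)) : Odd (Nat.card (T.connectedComponentMk v).supp) := by
  classical
  have hset : Nat.card (T.connectedComponentMk v).supp
      = (T.connectedComponentMk v).supp.toFinset.card := by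
    rw [Nat.card_eq_fintype_card, Set.toFinset_card]
  let s := (T.connectedComponentMk v).supp.toFinset.erase v
  have hmem : ∀ x, x ∈ s ↔ x ≠ v ∧ T.Reachable x v := by
    intro x
    simp [s]
  have hgood : ∀ x ∈ s, T.Adj x (n x) := by
    intro x hx
    by_contra h
    exact ((hmem x).1 hx).1 (hb x v h hv ((hmem x).1 hx).2)
  have hsum : ∑ x ∈ s, (1 : ZMod 2) = 0 := by
    refine Finset.sum_involution (fun x _ => n x) ?_ ?_ ?_ ?_
    · intros; decide
    · intro x _ _; exact hne x
    · intro x hx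
      rw [hmem]
      refine ⟨?_, (hgood x hx).symm.reachable.trans ((hmem x).1 hx).2⟩
      rintro h
      apply hv
      rw [← h, hi x]; exact (hgood x hx).symm
    · intro x _; exact hi x
  have hev : Even s.card := by
    rw [← ZMod.natCast_eq_zero_iff_even]; simpa using hsum
  rw [hset, ← Finset.card_erase_add_one (a := v) (by simp)]
  exact hev.add_one

theorem side_struct {V : Type*} [Fintype V] (G : SimpleGraph V)
    (hG : ∀ v : V, (G.neighborSet v).ncard = 3) (T : SimpleGraph V) (m n : V → V)
    (hm : ∀ v, G.Adj v (m v)) (hTG : ∀ u v, G.Adj u v → v ≠ m u → T.Adj u v)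
    (hTle : ∀ u v, T.Adj u v → G.Adj u v ∧ v ≠ m u)
    (hb : ∀ u v, ¬ T.Adj u (n u) → ¬ T.Adj v (n v) → T.Reachable u v → u = v)
    (S : Set V) (hmS : ∀ v ∈ S, m v ∉ S) (hnS : ∀ v ∈ S, n v ∉ S) :
    MonoOK G 3 S ∧ ∀ c : (G.induce S).ConnectedComponent, Nat.card c.supp = 3 →
      ∃ b : S, ¬ T.Adj b.1 (n b.1) ∧ (G.induce S).connectedComponentMk b = c := by
  classical
  have himg : ∀ (v : S) (X : Set V), (∀ w ∈ S, G.Adj v w → w ∈ X) →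
      ((G.induce S).neighborSet v).ncard ≤ X.ncard := by
    intro v X hX
    rw [← Set.ncard_image_of_injective _ Subtype.val_injective]
    refine Set.ncard_le_ncard ?_ (Set.toFinite _)
    rintro _ ⟨w, hw, rfl⟩
    exact hX w w.2 hw
  have := star_struct (G.induce S) {v | ¬ T.Adj v.1 (n v.1)} ?_ ?_ ?_
  · obtain ⟨h1, h2, h3⟩ := this
    exact ⟨⟨h1, h2⟩, h3⟩
  · intro v hv
    have hv : T.Adj v.1 (n v.1) := by simpa using hv
    refine (himg v (G.neighborSet v \ {m v.1, n v.1}) ?_).trans ?_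
    · intro w hw h
      refine ⟨h, ?_⟩
      rintro (rfl | rfl)
      · exact hmS _ v.2 hw
      · exact hnS _ v.2 hw
    · rw [Set.ncard_sdiff (by
        rintro x (rfl | rfl)
        · exact hm _
        · exact (hTle _ _ hv).1) (Set.toFinite _), hG, Set.ncard_pair (hTle _ _ hv).2.symm]
  · intro v
    refine (himg v (G.neighborSet v \ {m v.1}) ?_).trans ?_
    · intro w hw h
      refine ⟨h, ?_⟩
      rintro rfl
      exact hmS _ v.2 hw
    · rw [Set.ncard_sdiff (by
        rintro x rfl
        exact hm _) (Set.toFinite _), hG, Set.ncard_singleton]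
  · intro u v hu hv h
    have h' : G.Adj u.1 v.1 := h
    have hT : T.Adj u.1 v.1 := hTG _ _ h' (by
      intro e
      exact hmS _ u.2 (e ▸ v.2))
    exact h'.ne (hb _ _ hu hv hT.reachable)

/-- If M is a perfect matching of a cubic graph G and the 2-factor T = E(G) \ M
has s odd cycle components, then G has a 5-weak bisection in which the number of
monochromatic paths on 3 vertices is at most s. -/
theorem stmt17 {V : Type*} [Fintype V] (G : SimpleGraph V) (hG : IsCubic G)
    (M : G.Subgraph) (hM : M.IsPerfectMatching)
    (T : SimpleGraph V) (hT : ∀ u v, T.Adj u v ↔ (G.Adj u v ∧ ¬ M.Adj u v))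
    (s : ℕ) (hs : s = Nat.card {c : T.ConnectedComponent // Odd (Nat.card c.supp)}) :
    ∃ S : Set V, IsWeakBisection G 5 S ∧
      Nat.card {c : (G.induce S).ConnectedComponent // Nat.card c.supp = 3} +
        Nat.card {c : (G.induce (Sᶜ : Set V)).ConnectedComponent // Nat.card c.supp = 3}
        ≤ s := by
  classical
  have hex : ∀ v, ∃ w, M.Adj v w ∧ ∀ y, M.Adj v y → y = w := fun v => by
    obtain ⟨w, h1, h2⟩ := hM.1 (hM.2 v)
    exact ⟨w, h1, h2⟩
  choose m hm hmu using hex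
  have hinv : Function.Involutive m := fun v => (hmu (m v) v (hm v).symm).symm
  have hmG : ∀ v, G.Adj v (m v) := fun v => (hm v).adj_sub
  have hmne : ∀ v, m v ≠ v := fun v => (hmG v).ne'
  have hTG : ∀ u v, G.Adj u v → v ≠ m u → T.Adj u v := fun u v h hne =>
    (hT u v).2 ⟨h, fun h' => hne (hmu u v h')⟩
  have hTle : ∀ u v, T.Adj u v → G.Adj u v ∧ v ≠ m u := by
    intro u v h
    obtain ⟨h1, h2⟩ := (hT u v).1 h
    refine ⟨h1, ?_⟩
    rintro rfl
    exact h2 (hm u)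
  have hG' : ∀ v : V, (G.neighborSet v).ncard = 3 := hG
  have hT2 : ∀ p a b c, T.Adj p a → T.Adj p b → T.Adj p c → a ≠ b → c = a ∨ c = b := by
    intro p a b c ha hb hc hab
    have hset : ({m p, a, b} : Set V) = G.neighborSet p := by
      refine Set.eq_of_subset_of_ncard_le ?_ ?_ (Set.toFinite _)
      · rintro x (rfl | rfl | rfl)
        · exact hmG p
        · exact (hTle _ _ ha).1
        · exact (hTle _ _ hb).1
      · rw [hG', Set.ncard_eq_three.2 ⟨m p, a, b, (hTle _ _ ha).2.symm, (hTle _ _ hb).2.symm,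
          hab, rfl⟩]
    have hc' : c ∈ ({m p, a, b} : Set V) := by
      rw [hset]; exact (hTle _ _ hc).1
    rcases hc' with h | h | h
    · exact absurd h (hTle _ _ hc).2
    · exact Or.inl h
    · exact Or.inr h
  obtain ⟨n, hni, hnne, hb⟩ := exists_good_inv T hT2 m hinv hmne
  obtain ⟨c, hcm, hcn⟩ := two_inv_color m n hinv hni hmne hnne
  let S : Set V := {v | c v = true}
  have hS : ∀ v, v ∈ S ↔ c v = true := fun _ => Iff.rfl
  have hSc : ∀ v, v ∈ Sᶜ ↔ c v = false := fun v => by simp [S]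
  obtain ⟨ok1, p1⟩ := side_struct G hG' T m n hmG hTG hTle hb S
    (by intro v hv; rw [hS] at *; simp [hcm, hv]) (by intro v hv; rw [hS] at *; simp [hcn, hv])
  obtain ⟨ok2, p2⟩ := side_struct G hG' T m n hmG hTG hTle hb Sᶜ
    (by intro v hv; rw [hSc] at *; simp [hcm, hv]) (by intro v hv; rw [hSc] at *; simp [hcn, hv])
  refine ⟨S, ⟨?_, ok1, ok2⟩, ?_⟩
  · change S.ncard = (Sᶜ).ncard
    rw [← Set.ncard_image_of_injective S hinv.injective]
    congr 1
    ext x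
    rw [hSc]
    constructor
    · rintro ⟨y, hy, rfl⟩
      rw [hS] at hy
      simp [hcm, hy]
    · intro hx
      exact ⟨m x, by rw [hS, hcm, hx]; rfl, hinv x⟩
  · choose f1 hf1 hf1' using p1
    choose f2 hf2 hf2' using p2
    rw [hs, ← Nat.card_sum]
    let F : ({c : (G.induce S).ConnectedComponent // Nat.card c.supp = 3} ⊕
        {c : (G.induce (Sᶜ : Set V)).ConnectedComponent // Nat.card c.supp = 3}) → V :=
      Sum.elim (fun c => (f1 c.1 c.2).1) (fun c => (f2 c.1 c.2).1)
    have hF : ∀ x, ¬ T.Adj (F x) (n (F x)) := by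
      rintro (x | x)
      · exact hf1 _ _
      · exact hf2 _ _
    have hFi : Function.Injective F := by
      rintro (x | x) (y | y) hxy
      · have : f1 x.1 x.2 = f1 y.1 y.2 := Subtype.ext hxy
        congr 1
        apply Subtype.ext
        rw [← hf1' x.1 x.2, this, hf1' y.1 y.2]
      · exfalso
        have hxy' : (f1 x.1 x.2).1 = (f2 y.1 y.2).1 := hxy
        exact (f2 y.1 y.2).2 (hxy' ▸ (f1 x.1 x.2).2)
      · exfalso
        have hxy' : (f2 x.1 x.2).1 = (f1 y.1 y.2).1 := hxy
        exact (f2 x.1 x.2).2 (hxy' ▸ (f1 y.1 y.2).2)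
      · have : f2 x.1 x.2 = f2 y.1 y.2 := Subtype.ext hxy
        congr 1
        apply Subtype.ext
        rw [← hf2' x.1 x.2, this, hf2' y.1 y.2]
    refine Nat.card_le_card_of_injective
      (fun x => (⟨T.connectedComponentMk (F x), odd_of_bad T n hni hnne hb _ (hF x)⟩ :
        {c : T.ConnectedComponent // Odd (Nat.card c.supp)})) ?_
    intro x y hxy
    apply hFi
    exact hb _ _ (hF x) (hF y) (ConnectedComponent.exact (congrArg Subtype.val hxy))
end
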